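/- Let Y be a block subspace of X̃_iw. Then for every j_0 ∈ ℕ there exists a sequence (x_k)_k in Y that generates a spreading model isometrically equivalent to the unit vector basis of ℓ1 equipped with the norm ‖Σ_k a_k e_k‖_{ℓ1,j_0} = max{ sup_k |a_k|, (m_{j_0}/m_{j_0+1})·Σ_k |a_k| }. -/

import Mathlib

/-!
The vectors `x k` are built from `y` in two rounds of averaging. Throughout, the basic feature of
the norming set is that in a very fast growing family all functionals but the first have weights
exceeding the support of their predecessors.

*Lower `ℓ₁` estimates in `Y`.* Peeling off the first members of norming functionals yields a
subsequence `v` of `y` each of whose members is normed, up to the factor `1/4`, by an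
`S_r`-admissible very fast growing family of functionals of arbitrarily large weight
(`exists_HiSeq`). Such families can be concatenated under a single weight, so `v` has lower `ℓ₁`
estimates of order `n_t - r` at the cost `m_t` (`HiSeq.lower`).

*Vectors with sharp estimates.* Suppose iterated special convex combinations of `v` lost a fixed
factor of norm at each step. Since `C ^ n_t / m_t → ∞` for every `C > 1`, this would contradict
the lower estimate, as in James' theorem; hence for every order there are special convex
combinations, of vectors of norm at most one, whose norm is almost one (`HiSeq.exists_average`).
By `key_estimate` and `low_weight_estimate` every functional of weight `m_j`, with `j` below a
prescribed bound, is at most about `1 / m_j` on such a vector, and functionals of huge weight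
almost vanish on it: this is the predicate `Fine`. Along a sequence of `Fine` vectors with rapidly
growing parameters each functional is exceptional for at most one vector (`Fine_exceptional`).

*The sequence.* `x k` is `m_{j0}` times a special convex combination, of order `n_{j0}`, of `Fine`
vectors (`avgVec`, `AvgSeq`), whose smallness parameter is chosen against the supports of all
earlier vectors.

*Upper estimate* (`AvgSeq.tame`, `Tame.upper`), by induction on the functional `f`, with
`θ = m_{j0} / m_{j0+1}`. If the weight of `f` exceeds `m_{j0}`, then `f` is at most about `θ` on
each `x k`, which gives `θ ∑ |a i|`. If the weight is `m_{j0}`, then `f` is at most about one on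
each `x k`; moreover, once the admissible family has started before `x k`, it splits into few
families of order `n_{j0} - 1`, which are too sparse to resolve the special convex combination. So
either only one `x k` is really seen, which gives `sup |a i|`, or only the first relevant component
of `f` matters and the induction hypothesis applies to it. If the weight is smaller, again all
components of large weight are together negligible, and one component is left to the induction
hypothesis; the factor `1 / 2` absorbs the errors.

*Lower estimate* (`AvgSeq.lower`). Almost norming functionals of the `Fine` vectors have large
weight, so they can be combined with weight `m_{j0}` on a single `x k`, giving `|a i|`, or with
weight `m_{j0+1}` on all of them, giving `θ ∑ |a i|`; the latter is admissible because
`n_{j0} + 1 ≤ n_{j0+1}` and the vectors start late.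
-/

open Filter Topology
open scoped ENNReal

noncomputable section

/-! ### Abstract Banach space notions -/

section Abstract

variable {X : Type*} [NormedAddCommGroup X] [NormedSpace ℝ X]

/-- A sequence is normalized if every term has norm one. -/
def Normalized (x : ℕ → X) : Prop := ∀ i, ‖x i‖ = 1

/-- A sequence is weakly null if it tends to `0` in the weak topology. -/
def WeaklyNull (x : ℕ → X) : Prop :=
  ∀ f : X →L[ℝ] ℝ, Tendsto (fun i => f (x i)) atTop (𝓝 (0 : ℝ))

end Abstract

/-- The ℓ₁ norm of finite coefficient vectors (the norms of finite linear
combinations of the unit vector basis of ℓ₁). -/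
def l1Norm : ∀ m : ℕ, (Fin m → ℝ) → ℝ := fun _ a => ∑ i, |a i|

/-- The sup norm of finite coefficient vectors (the norms of finite linear
combinations of the unit vector basis of c₀). -/
def supNorm : ∀ m : ℕ, (Fin m → ℝ) → ℝ := fun _ a => ⨆ i, |a i|

/-- The ℓ_p norm of finite coefficient vectors, `1 ≤ p < ∞`. -/
def lpNormFin (p : ℝ) : ∀ m : ℕ, (Fin m → ℝ) → ℝ := fun _ a => (∑ i, |a i| ^ p) ^ (1 / p)

/-- The ℓ_q norms of finite coefficient vectors, `q ∈ [1,∞]`, where `q = ∞`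
corresponds to `c₀`. -/
def finLqNorm (q : ℝ≥0∞) : ∀ m : ℕ, (Fin m → ℝ) → ℝ := fun m a =>
  if q = ⊤ then supNorm m a else lpNormFin q.toReal m a

/-- The family of seminorms `ν` (of finite combinations of a sequence in a seminormed
space) is `C`-equivalent to the family `μ`:  there are `A B > 0` with `A * B ≤ C` and
`(1/A) * μ ≤ ν ≤ B * μ`. -/
def NormFamEquiv (C : ℝ) (μ ν : ∀ m : ℕ, (Fin m → ℝ) → ℝ) : Prop :=
  ∃ A B : ℝ, 0 < A ∧ 0 < B ∧ A * B ≤ C ∧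
    ∀ (m : ℕ) (a : Fin m → ℝ), (1 / A) * μ m a ≤ ν m a ∧ ν m a ≤ B * μ m a

section Abstract2

variable {X : Type*} [NormedAddCommGroup X] [NormedSpace ℝ X]

/-- The sequence `x` generates the spreading model whose finite-combination
seminorms are given by the family `ν`. -/
def GeneratesSpreadingModel (x : ℕ → X) (ν : ∀ m : ℕ, (Fin m → ℝ) → ℝ) : Prop :=
  ∀ (m : ℕ) (a : Fin m → ℝ), ∀ ε > (0 : ℝ), ∃ N : ℕ, ∀ j : Fin m → ℕ,
    StrictMono j → (∀ i, N ≤ j i) → |‖∑ i, a i • x (j i)‖ - ν m a| < ε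

/-- The array of sequences `A` (row `A i` is the `i`-th sequence) generates the
asymptotic model whose finite-combination seminorms are given by `ν`. -/
def GeneratesAsymptoticModel (A : ℕ → ℕ → X) (ν : ∀ l : ℕ, (Fin l → ℝ) → ℝ) : Prop :=
  ∀ (l : ℕ) (a : Fin l → ℝ), ∀ ε > (0 : ℝ), ∃ N : ℕ, ∀ j : Fin l → ℕ,
    StrictMono j → (∀ i, N ≤ j i) → |‖∑ i, a i • A i (j i)‖ - ν l a| < ε

/-- `e` is a Schauder basis of `X`. -/
def IsSchauderBasis (e : ℕ → X) : Prop :=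
  ∀ x : X, ∃! a : ℕ → ℝ,
    Tendsto (fun n => ∑ i ∈ Finset.range n, a i • e i) atTop (𝓝 x)

/-- The basis `e` is 1-unconditional. -/
def OneUnconditional (e : ℕ → X) : Prop :=
  ∀ (F : Finset ℕ) (a ε : ℕ → ℝ), (∀ i, ε i = 1 ∨ ε i = -1) →
    ‖∑ i ∈ F, (ε i * a i) • e i‖ = ‖∑ i ∈ F, a i • e i‖

/-- `x` is a block sequence with respect to the basis `e`. -/
def IsBlockSeq (e : ℕ → X) (x : ℕ → X) : Prop :=
  ∃ F : ℕ → Finset ℕ, (∀ k, (F k).Nonempty) ∧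
    (∀ k l : ℕ, k < l → ∀ i ∈ F k, ∀ j ∈ F l, i < j) ∧
    ∀ k, x k ≠ 0 ∧ x k ∈ Submodule.span ℝ (e '' ↑(F k))

/-- `z` is a finite block sequence with respect to the basis `e`. -/
def IsFinBlockSeq (e : ℕ → X) {n : ℕ} (z : Fin n → X) : Prop :=
  ∃ F : Fin n → Finset ℕ, (∀ k, (F k).Nonempty) ∧
    (∀ k l : Fin n, k < l → ∀ i ∈ F k, ∀ j ∈ F l, i < j) ∧
    ∀ k, z k ≠ 0 ∧ z k ∈ Submodule.span ℝ (e '' ↑(F k))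

/-- `Y` is a block subspace of `X` (with respect to the basis `e`): the closed
linear span of an infinite normalized block sequence. -/
def IsBlockSubspace (e : ℕ → X) (Y : Set X) : Prop :=
  ∃ y : ℕ → X, IsBlockSeq e y ∧ Normalized y ∧
    Y = closure (↑(Submodule.span ℝ (Set.range y)) : Set X)

/-- The finite sequence `z` is `C`-equivalent to a finite basic sequence whose
finite-combination norms are given by `μ`. -/
def FinSeqEquiv (C : ℝ) {n : ℕ} (μ : (Fin n → ℝ) → ℝ) (z : Fin n → X) : Prop :=
  ∃ A B : ℝ, 0 < A ∧ 0 < B ∧ A * B ≤ C ∧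
    ∀ a : Fin n → ℝ, (1 / A) * μ a ≤ ‖∑ i, a i • z i‖ ∧ ‖∑ i, a i • z i‖ ≤ B * μ a

/-- The finite basic sequence with combination norms `μ` is block representable
in `Y ⊆ X`. -/
def BlockRepresentableIn (e : ℕ → X) (Y : Set X) {n : ℕ} (μ : (Fin n → ℝ) → ℝ) : Prop :=
  ∀ ε > (0 : ℝ), ∃ z : Fin n → X, (∀ i, z i ∈ Y) ∧ IsFinBlockSeq e z ∧
    FinSeqEquiv (1 + ε) μ z

/-- `x` is a (Schauder) basic sequence. -/
def IsBasicSeq (x : ℕ → X) : Prop :=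
  (∀ i, x i ≠ 0) ∧ ∃ K : ℝ, 0 < K ∧ ∀ (a : ℕ → ℝ) (m n : ℕ), m ≤ n →
    ‖∑ i ∈ Finset.range m, a i • x i‖ ≤ K * ‖∑ i ∈ Finset.range n, a i • x i‖

end Abstract2

/-- A plegma of `k` strictly increasing `l`-tuples of naturals. -/
def IsPlegma (k l : ℕ) (s : Fin k → Fin l → ℕ) : Prop :=
  (∀ i, StrictMono (s i)) ∧
  (∀ i₁ i₂ : Fin k, ∀ j₁ j₂ : Fin l, j₁ < j₂ → s i₁ j₁ < s i₂ j₂) ∧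
  (∀ i₁ i₂ : Fin k, i₁ < i₂ → ∀ j, s i₁ j ≤ s i₂ j)

/-- A strict plegma: a plegma with pairwise disjoint tuples. -/
def IsStrictPlegma (k l : ℕ) (s : Fin k → Fin l → ℕ) : Prop :=
  IsPlegma k l s ∧ ∀ i₁ i₂ : Fin k, i₁ ≠ i₂ → ∀ j₁ j₂ : Fin l, s i₁ j₁ ≠ s i₂ j₂

section Abstract3

variable {X : Type*} [NormedAddCommGroup X] [NormedSpace ℝ X]

/-- The `l`-array `x` generates the joint spreading model with finite-combination
seminorms `ν`. -/
def GeneratesJSM (l : ℕ) (x : Fin l → ℕ → X)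
    (ν : ∀ k : ℕ, (Fin l → Fin k → ℝ) → ℝ) : Prop :=
  ∀ (k : ℕ) (a : Fin l → Fin k → ℝ), ∀ ε > (0 : ℝ), ∃ N : ℕ,
    ∀ s : Fin l → Fin k → ℕ, IsStrictPlegma l k s → (∀ i j, N ≤ s i j) →
      |‖∑ i, ∑ j, a i j • x i (s i j)‖ - ν k a| < ε

/-- `X` admits a unique joint spreading model with respect to the family of
sequences `F`. -/
def UniqueJSM (F : Set (ℕ → X)) : Prop :=
  ∃ C : ℝ, 1 ≤ C ∧ ∀ (l : ℕ) (x y : Fin l → ℕ → X),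
    (∀ i, x i ∈ F) → (∀ i, y i ∈ F) →
    ∀ ν μ, GeneratesJSM l x ν → GeneratesJSM l y μ →
      ∃ A B : ℝ, 0 < A ∧ 0 < B ∧ A * B ≤ C ∧
        ∀ (k : ℕ) (a : Fin l → Fin k → ℝ),
          (1 / A) * μ k a ≤ ν k a ∧ ν k a ≤ B * μ k a

/-- `X` admits a unique asymptotic model with respect to the family of
sequences `F`. -/
def UniqueAM (F : Set (ℕ → X)) : Prop :=
  ∀ x y : ℕ → ℕ → X, (∀ i, x i ∈ F) → (∀ i, y i ∈ F) →
    ∀ ν μ, GeneratesAsymptoticModel x ν → GeneratesAsymptoticModel y μ →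
      ∃ C : ℝ, 1 ≤ C ∧ NormFamEquiv C μ ν

end Abstract3

/-- A bundled Banach-space candidate. -/
structure BanachPkg : Type 1 where
  X : Type
  [grp : NormedAddCommGroup X]
  [mod : NormedSpace ℝ X]

attribute [instance] BanachPkg.grp BanachPkg.mod

/-! ### c₀₀ and the norming sets -/

/-- The finitely supported real sequences. -/
abbrev c00 : Type := ℕ →₀ ℝ

/-- Minimum of the support (0 for the zero vector). -/
def minSupp (x : c00) : ℕ := if h : x.support.Nonempty then x.support.min' h else 0

/-- Maximum of the support (0 for the zero vector). -/
def maxSupp (x : c00) : ℕ := if h : x.support.Nonempty then x.support.max' h else 0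

/-- Minimum of a finset of naturals (0 if empty). -/
def finsetMin (F : Finset ℕ) : ℕ := if h : F.Nonempty then F.min' h else 0

/-- `x < y` as successive (block) vectors. -/
def Blocks (x y : c00) : Prop := maxSupp x < minSupp y

/-- The Schreier families. -/
def Schreier : ℕ → Set (Finset ℕ)
  | 0 => {F | ∃ i : ℕ, F = {i}}
  | n + 1 => {F | ∃ (d : ℕ) (G : Fin d → Finset ℕ),
      (∀ k, G k ∈ Schreier n) ∧
      (∀ k l : Fin d, k < l → ∀ i ∈ G k, ∀ j ∈ G l, i < j) ∧
      (∀ i ∈ F, d ≤ i) ∧ F = Finset.univ.biUnion G}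

/-- The family `A_m` of sets of cardinality at most `m`. -/
def SchreierA (m : ℕ) : Set (Finset ℕ) := {F | F.card ≤ m}

/-- The operation `A * B` on families of finite sets. -/
def famStar (A B : Set (Finset ℕ)) : Set (Finset ℕ) :=
  {F | ∃ (d : ℕ) (G : Fin d → Finset ℕ),
      (∀ k, G k ∈ B) ∧ (∀ k, (G k).Nonempty) ∧
      (∀ k l : Fin d, k < l → ∀ i ∈ G k, ∀ j ∈ G l, i < j) ∧
      (Finset.univ.image fun k => finsetMin (G k)) ∈ A ∧ F = Finset.univ.biUnion G}

/-- A finite block sequence in `c00` is `S`-admissible. -/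
def Admissible (S : Set (Finset ℕ)) {d : ℕ} (f : Fin d → c00) : Prop :=
  (∀ q, (f q).support.Nonempty) ∧
  (∀ q r : Fin d, q < r → Blocks (f q) (f r)) ∧
  (Finset.univ.image fun q => minSupp (f q)) ∈ S

/-- The two fixed sequences `(m_j)`, `(n_j)` (indexed here starting at `0`, so that
`m 0` plays the role of `m_1` etc.) together with their growth conditions. -/
structure IWParams where
  m : ℕ → ℕ
  n : ℕ → ℕ
  m_mono : StrictMono m
  n_mono : StrictMono n
  m_first : m 0 = 2
  n_first : n 0 = 1
  growth_exp : ∀ C : ℝ, 1 < C → Tendsto (fun j => C ^ (n j) / (m j : ℝ)) atTop atTop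
  growth_ratio : Tendsto (fun j => (m j : ℝ) / (m (j + 1) : ℝ)) atTop (𝓝 0)
  growth_sum : ∀ (l : ℕ) (js : Fin l → ℕ) (j : ℕ), (∀ i, js i ≤ j) →
    (∏ i, m (js i)) < m (j + 1) ^ 2 → (∑ i, n (js i)) + 1 < n (j + 1)

/-- The action of a functional `f ∈ c00` on a vector `x ∈ c00`. -/
def evalPair (f x : c00) : ℝ := f.sum fun i a => a * x i

/-- The norming set `W_iw`, together with admissible weights: `WIW P f w` means
that `f` belongs to the norming set and `w` is a weight of (one representation of)
`f`; the unit functionals `±e_i^*` have weight `∞`. -/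
inductive WIW (P : IWParams) : c00 → ℕ∞ → Prop
  | unit (i : ℕ) (s : ℝ) (hs : s = 1 ∨ s = -1) : WIW P (Finsupp.single i s) ⊤
  | op (l : ℕ) (hl : 0 < l) (js : Fin l → ℕ) (d : ℕ) (f : Fin d → c00) (w : Fin d → ℕ∞)
      (hf : ∀ q, WIW P (f q) (w q))
      (hadm : Admissible (Schreier (∑ i, P.n (js i))) f)
      (hvfg : ∀ q r : Fin d, (q : ℕ) + 1 = (r : ℕ) → (maxSupp (f q) : ℕ∞) < w r) :
      WIW P (((∏ i, P.m (js i) : ℕ) : ℝ)⁻¹ • ∑ q, f q) ((∏ i, P.m (js i) : ℕ) : ℕ∞)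

/-- Membership in the norming set `W_iw`. -/
def memWIW (P : IWParams) (f : c00) : Prop := ∃ w, WIW P f w

/-- The norm of `X_iw`, on finitely supported vectors. -/
def iwNorm (P : IWParams) (x : c00) : ℝ :=
  sSup {r | ∃ f, memWIW P f ∧ r = evalPair f x}

/-- The dual norm of a finitely supported functional, as an element of `X_iw^*`. -/
def iwDualNorm (P : IWParams) (f : c00) : ℝ :=
  sSup {r | ∃ x : c00, iwNorm P x ≤ 1 ∧ r = evalPair f x}

/-- The auxiliary norming set `W_aux^N` together with admissible weights. -/
inductive WAux (P : IWParams) (N : ℕ) : c00 → ℕ∞ → Prop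
  | unit (i : ℕ) (s : ℝ) (hs : s = 1 ∨ s = -1) : WAux P N (Finsupp.single i s) ⊤
  | op (l : ℕ) (hl : 0 < l) (js : Fin l → ℕ) (d : ℕ) (f : Fin d → c00) (w : Fin d → ℕ∞)
      (hf : ∀ q, WAux P N (f q) (w q))
      (hadm : Admissible (famStar (Schreier (∑ i, P.n (js i))) (SchreierA 3)) f)
      (hlarge : ∀ q : Fin d, 0 < (q : ℕ) → (N : ℕ∞) < w q) :
      WAux P N (((∏ i, P.m (js i) : ℕ) : ℝ)⁻¹ • ∑ q, f q) ((∏ i, P.m (js i) : ℕ) : ℕ∞)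

/-- An `(n, ε)` basic special convex combination. -/
def IsBasicSCC (n : ℕ) (ε : ℝ) (x : c00) : Prop :=
  ∃ F : Finset ℕ, x.support ⊆ F ∧ F ∈ Schreier n ∧ (∀ i, 0 ≤ x i) ∧
    (∑ i ∈ F, x i) = 1 ∧ ∀ G ⊆ F, G ∈ Schreier (n - 1) → (∑ i ∈ G, x i) < ε

/-- An `(n, ε)` special convex combination `∑ c i • x i`. -/
def IsSCC (n : ℕ) (ε : ℝ) {m : ℕ} (c : Fin m → ℝ) (x : Fin m → c00) : Prop :=
  (∀ i, (x i).support.Nonempty) ∧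
  (∀ i j : Fin m, i < j → Blocks (x i) (x j)) ∧
  IsBasicSCC n ε (∑ i, c i • Finsupp.single (minSupp (x i)) (1 : ℝ))

/-- `x` generates, with respect to the norm function `Nrm` on `c00`, the spreading
model whose finite-combination seminorms are `ν`. -/
def GeneratesSMwith (Nrm : c00 → ℝ) (x : ℕ → c00) (ν : ∀ m : ℕ, (Fin m → ℝ) → ℝ) : Prop :=
  ∀ (m : ℕ) (a : Fin m → ℝ), ∀ ε > (0 : ℝ), ∃ N : ℕ, ∀ j : Fin m → ℕ,
    StrictMono j → (∀ i, N ≤ j i) → |Nrm (∑ i, a i • x (j i)) - ν m a| < ε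

/-- The array `A` generates, with respect to the norm function `Nrm` on `c00`, the
asymptotic model whose finite-combination seminorms are `ν`. -/
def GeneratesAMwith (Nrm : c00 → ℝ) (A : ℕ → ℕ → c00) (ν : ∀ l : ℕ, (Fin l → ℝ) → ℝ) : Prop :=
  ∀ (l : ℕ) (a : Fin l → ℝ), ∀ ε > (0 : ℝ), ∃ N : ℕ, ∀ j : Fin l → ℕ,
    StrictMono j → (∀ i, N ≤ j i) → |Nrm (∑ i, a i • A i (j i)) - ν l a| < ε

/-- A normalized block sequence in `c00` with respect to a norm function. -/
def IsNormBlockSeq (Nrm : c00 → ℝ) (y : ℕ → c00) : Prop :=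
  (∀ k, (y k).support.Nonempty) ∧ (∀ k, Blocks (y k) (y (k + 1))) ∧ ∀ k, Nrm (y k) = 1

/-- A `(C, (j_i)_{i ∈ I})` rapidly increasing sequence, `I` a (finite) interval. -/
def IsRIS (P : IWParams) (C : ℝ) (I : Finset ℕ) (j : ℕ → ℕ) (x : ℕ → c00) : Prop :=
  (∀ a ∈ I, ∀ b ∈ I, ∀ c : ℕ, a ≤ c → c ≤ b → c ∈ I) ∧
  (∀ a ∈ I, ∀ b ∈ I, a < b → j a < j b) ∧
  (∀ i ∈ I, (x i).support.Nonempty) ∧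
  (∀ a ∈ I, ∀ b ∈ I, a < b → Blocks (x a) (x b)) ∧
  (∀ i ∈ I, iwNorm P (x i) ≤ C) ∧
  (∀ i ∈ I, ∀ i' ∈ I, i' + 1 = i → (maxSupp (x i') : ℝ) < Real.sqrt (P.m (j i))) ∧
  (∀ i ∈ I, ∀ f w, WIW P f w → w < ((P.m (j i) : ℕ) : ℕ∞) →
    |evalPair f (x i)| ≤ C / (w.toNat : ℝ))

/-- An infinite `(C, (j_i)_i)` rapidly increasing sequence. -/
def IsRISNat (P : IWParams) (C : ℝ) (j : ℕ → ℕ) (x : ℕ → c00) : Prop :=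
  StrictMono j ∧ (∀ i, (x i).support.Nonempty) ∧ (∀ i, Blocks (x i) (x (i + 1))) ∧
  (∀ i, iwNorm P (x i) ≤ C) ∧
  (∀ i, (maxSupp (x i) : ℝ) < Real.sqrt (P.m (j (i + 1)))) ∧
  (∀ i, ∀ f w, WIW P f w → w < ((P.m (j i) : ℕ) : ℕ∞) →
    |evalPair f (x i)| ≤ C / (w.toNat : ℝ))

/-- `X` together with the basis `e` is a realization of the space `X_iw`: a Banach
space in which `c00` sits isometrically (w.r.t. `iwNorm`) and densely. -/
structure IsIWRealization (P : IWParams) (X : Type*) [NormedAddCommGroup X]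
    [NormedSpace ℝ X] (e : ℕ → X) : Prop where
  complete : CompleteSpace X
  dense : DenseRange fun a : c00 => ∑ i ∈ a.support, a i • e i
  norm_eq : ∀ a : c00, ‖∑ i ∈ a.support, a i • e i‖ = iwNorm P a

/-- The conjugate exponent of `p`. -/
def conjExp (p : ℝ) : ℝ := p / (p - 1)

/-- The norming set `W_iw^p` together with admissible weights. -/
inductive WIWp (P : IWParams) (p : ℝ) : c00 → ℕ∞ → Prop
  | unit (i : ℕ) (s : ℝ) (hs : s = 1 ∨ s = -1) : WIWp P p (Finsupp.single i s) ⊤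
  | op (l : ℕ) (hl : 0 < l) (js : Fin l → ℕ) (d : ℕ) (f : Fin d → c00) (w : Fin d → ℕ∞)
      (lam : Fin d → ℝ) (hlam : (∑ q, |lam q| ^ conjExp p) ≤ 1)
      (hf : ∀ q, WIWp P p (f q) (w q))
      (hadm : Admissible (Schreier (∑ i, P.n (js i))) f)
      (hvfg : ∀ q r : Fin d, (q : ℕ) + 1 = (r : ℕ) → (maxSupp (f q) : ℕ∞) < w r) :
      WIWp P p (((∏ i, P.m (js i) : ℕ) : ℝ)⁻¹ • ∑ q, lam q • f q)
        ((∏ i, P.m (js i) : ℕ) : ℕ∞)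

/-- The norm of `X_iw^p` on finitely supported vectors. -/
def iwpNorm (P : IWParams) (p : ℝ) (x : c00) : ℝ :=
  sSup {r | ∃ f, (∃ w, WIWp P p f w) ∧ r = evalPair f x}

/-- The norming set of the space `X̃_iw`, together with admissible weights. -/
inductive WT (P : IWParams) : c00 → ℕ∞ → Prop
  | unit (i : ℕ) (s : ℝ) (hs : s = 1 ∨ s = -1) : WT P (Finsupp.single i s) ⊤
  | op (j : ℕ) (d : ℕ) (f : Fin d → c00) (w : Fin d → ℕ∞)
      (hf : ∀ q, WT P (f q) (w q))
      (hadm : Admissible (Schreier (P.n j)) f)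
      (hvfg : ∀ q r : Fin d, (q : ℕ) + 1 = (r : ℕ) → (maxSupp (f q) : ℕ∞) < w r) :
      WT P ((P.m j : ℝ)⁻¹ • ∑ q, f q) ((P.m j : ℕ) : ℕ∞)

/-- The norm of `X̃_iw` on finitely supported vectors. -/
def tNorm (P : IWParams) (x : c00) : ℝ :=
  sSup {r | ∃ f, (∃ w, WT P f w) ∧ r = evalPair f x}

end

/-! ### Schreier families -/

/-- A hereditary variant of the Schreier families: `SS 0` consists of the sets with at most one
element (so that `∅` is allowed), and a set only has to be *covered* by the `d` successive pieces.
For `n ≥ 1` it agrees with `Schreier n`. -/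
def SS : ℕ → Finset ℕ → Prop
  | 0, F => F.card ≤ 1
  | n + 1, F => ∃ (d : ℕ) (G : ℕ → Finset ℕ),
      (∀ k < d, SS n (G k)) ∧
      (∀ k l : ℕ, k < l → l < d → ∀ i ∈ G k, ∀ j ∈ G l, i < j) ∧
      (∀ i ∈ F, d ≤ i) ∧ F ⊆ (Finset.range d).biUnion G

theorem SS.subset {n : ℕ} {F F' : Finset ℕ} (h : SS n F) (hs : F' ⊆ F) : SS n F' := by
  cases n with
  | zero => exact (Finset.card_le_card hs).trans h
  | succ n =>
    obtain ⟨d, G, h1, h2, h3, h4⟩ := h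
    exact ⟨d, G, h1, h2, fun i hi => h3 i (hs hi), hs.trans h4⟩

theorem SS.succ {n : ℕ} {F : Finset ℕ} (h : SS n F) (h1 : ∀ i ∈ F, 1 ≤ i) : SS (n + 1) F := by
  refine ⟨1, fun _ => F, fun _ _ => h, fun k l hk hl => by omega, h1, ?_⟩
  intro i hi
  simpa using hi

theorem SS.mono {n m : ℕ} (hnm : n ≤ m) {F : Finset ℕ} (h : SS n F) (h1 : ∀ i ∈ F, 1 ≤ i) :
    SS m F := by
  induction m, hnm using Nat.le_induction with
  | base => exact h
  | succ m _ ih => exact ih.succ h1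

theorem SS.of_card {n : ℕ} {F : Finset ℕ} (h : F.card ≤ 1) (h1 : ∀ i ∈ F, 1 ≤ i) : SS n F :=
  SS.mono (Nat.zero_le n) (F := F) h h1

/-- Spreading: moving the elements of a Schreier set to the right, order preserved, stays in the
family. -/
theorem SS.spread {ι : Type*} {n : ℕ} (Q : Finset ι) (α β : ι → ℕ)
    (h : SS n (Q.image α)) (hle : ∀ q ∈ Q, α q ≤ β q)
    (hlt : ∀ q ∈ Q, ∀ r ∈ Q, α q < α r → β q < β r)
    (heq : ∀ q ∈ Q, ∀ r ∈ Q, α q = α r → β q = β r) : SS n (Q.image β) := by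
  classical
  induction n generalizing Q with
  | zero =>
    refine Finset.card_le_one.2 ?_
    have h' := Finset.card_le_one.1 (show (Q.image α).card ≤ 1 from h)
    intro x hx y hy
    obtain ⟨q, hq, rfl⟩ := Finset.mem_image.1 hx
    obtain ⟨r, hr, rfl⟩ := Finset.mem_image.1 hy
    exact heq q hq r hr (h' _ (Finset.mem_image_of_mem _ hq) _ (Finset.mem_image_of_mem _ hr))
  | succ n ih =>
    obtain ⟨d, G, h1, h2, h3, h4⟩ := h
    refine ⟨d, fun k => (Q.filter (fun q => α q ∈ G k)).image β, ?_, ?_, ?_, ?_⟩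
    · intro k hk
      refine ih _ ((h1 k hk).subset ?_) ?_ ?_ ?_
      · intro x hx
        obtain ⟨q, hq, rfl⟩ := Finset.mem_image.1 hx
        exact (Finset.mem_filter.1 hq).2
      · intro q hq; exact hle q (Finset.mem_filter.1 hq).1
      · intro q hq r hr; exact hlt q (Finset.mem_filter.1 hq).1 r (Finset.mem_filter.1 hr).1
      · intro q hq r hr; exact heq q (Finset.mem_filter.1 hq).1 r (Finset.mem_filter.1 hr).1
    · intro k l hkl hl i hi j hj
      obtain ⟨q, hq, rfl⟩ := Finset.mem_image.1 hi
      obtain ⟨r, hr, rfl⟩ := Finset.mem_image.1 hj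
      rw [Finset.mem_filter] at hq hr
      exact hlt q hq.1 r hr.1 (h2 k l hkl hl _ hq.2 _ hr.2)
    · intro i hi
      obtain ⟨q, hq, rfl⟩ := Finset.mem_image.1 hi
      exact (h3 _ (Finset.mem_image_of_mem _ hq)).trans (hle q hq)
    · intro i hi
      obtain ⟨q, hq, rfl⟩ := Finset.mem_image.1 hi
      obtain ⟨k, hk, hk2⟩ := Finset.mem_biUnion.1 (h4 (Finset.mem_image_of_mem α hq))
      exact Finset.mem_biUnion.2 ⟨k, hk, Finset.mem_image.2 ⟨q, Finset.mem_filter.2 ⟨hq, hk2⟩, rfl⟩⟩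

/-- Convolution: successive `SS q` sets whose starting points form an `SS p` set have an
`SS (p + q)` union. -/
theorem SS.comp {ι : Type*} {p q : ℕ} (E : Finset ι) (α : ι → ℕ) (D : ι → Finset ℕ)
    (h : SS p (E.image α)) (hinj : ∀ s ∈ E, ∀ t ∈ E, α s = α t → s = t)
    (hD : ∀ s ∈ E, SS q (D s)) (hle : ∀ s ∈ E, ∀ i ∈ D s, α s ≤ i)
    (hlt : ∀ s ∈ E, ∀ t ∈ E, α s < α t → ∀ i ∈ D s, ∀ j ∈ D t, i < j) :
    SS (p + q) (E.biUnion D) := by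
  classical
  induction p generalizing E with
  | zero =>
    rw [zero_add]
    have h' := Finset.card_le_one.1 (show (E.image α).card ≤ 1 from h)
    rcases E.eq_empty_or_nonempty with rfl | ⟨s, hs⟩
    · simp only [Finset.biUnion_empty]
      exact SS.of_card (by simp) (by simp)
    · refine (hD s hs).subset ?_
      intro i hi
      obtain ⟨t, ht, hti⟩ := Finset.mem_biUnion.1 hi
      have := hinj s hs t ht
        (h' _ (Finset.mem_image_of_mem _ hs) _ (Finset.mem_image_of_mem _ ht))
      rwa [this]
  | succ p ih =>
    obtain ⟨d, G, h1, h2, h3, h4⟩ := h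
    have e : p + 1 + q = (p + q) + 1 := by omega
    rw [e]
    refine ⟨d, fun k => (E.filter (fun s => α s ∈ G k)).biUnion D, ?_, ?_, ?_, ?_⟩
    · intro k hk
      refine ih _ ((h1 k hk).subset ?_) ?_ ?_ ?_ ?_
      · intro x hx
        obtain ⟨s, hs, rfl⟩ := Finset.mem_image.1 hx
        exact (Finset.mem_filter.1 hs).2
      · intro s hs t ht; exact hinj s (Finset.mem_filter.1 hs).1 t (Finset.mem_filter.1 ht).1
      · intro s hs; exact hD s (Finset.mem_filter.1 hs).1
      · intro s hs; exact hle s (Finset.mem_filter.1 hs).1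
      · intro s hs t ht; exact hlt s (Finset.mem_filter.1 hs).1 t (Finset.mem_filter.1 ht).1
    · intro k l hkl hl i hi j hj
      obtain ⟨s, hs, hi⟩ := Finset.mem_biUnion.1 hi
      obtain ⟨t, ht, hj⟩ := Finset.mem_biUnion.1 hj
      rw [Finset.mem_filter] at hs ht
      exact hlt s hs.1 t ht.1 (h2 k l hkl hl _ hs.2 _ ht.2) i hi j hj
    · intro i hi
      obtain ⟨s, hs, hi⟩ := Finset.mem_biUnion.1 hi
      exact (h3 _ (Finset.mem_image_of_mem _ hs)).trans (hle s hs i hi)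
    · intro i hi
      obtain ⟨s, hs, hi⟩ := Finset.mem_biUnion.1 hi
      obtain ⟨k, hk, hk2⟩ := Finset.mem_biUnion.1 (h4 (Finset.mem_image_of_mem α hs))
      exact Finset.mem_biUnion.2 ⟨k, hk, Finset.mem_biUnion.2 ⟨s, Finset.mem_filter.2 ⟨hs, hk2⟩, hi⟩⟩

theorem SS_of_Schreier {n : ℕ} {F : Finset ℕ} (h : F ∈ Schreier n) : SS n F := by
  induction n generalizing F with
  | zero =>
    obtain ⟨i, rfl⟩ := h
    exact (Finset.card_singleton i).le
  | succ n ih =>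
    obtain ⟨d, G, h1, h2, h3, h4⟩ := h
    refine ⟨d, fun k => if hk : k < d then G ⟨k, hk⟩ else ∅, ?_, ?_, h3, ?_⟩
    · intro k hk
      simp only [hk, dif_pos]
      exact ih (h1 _)
    · intro k l hkl hl i hi j hj
      simp only [hl, hkl.trans hl, dif_pos] at hi hj
      exact h2 ⟨k, hkl.trans hl⟩ ⟨l, hl⟩ hkl i hi j hj
    · intro i hi
      rw [h4] at hi
      obtain ⟨k, -, hk⟩ := Finset.mem_biUnion.1 hi
      refine Finset.mem_biUnion.2 ⟨k, Finset.mem_range.2 k.2, ?_⟩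
      simpa using hk

theorem Schreier_of_SS {n : ℕ} {F : Finset ℕ} (h : SS (n + 1) F) : F ∈ Schreier (n + 1) := by
  classical
  induction n generalizing F with
  | zero =>
    obtain ⟨d, G, h1, h2, h3, h4⟩ := h
    have hcard : F.card ≤ d := by
      calc F.card ≤ ((Finset.range d).biUnion G).card := Finset.card_le_card h4
        _ ≤ ∑ k ∈ Finset.range d, (G k).card := Finset.card_biUnion_le
        _ ≤ ∑ k ∈ Finset.range d, 1 := Finset.sum_le_sum fun k hk => h1 k (Finset.mem_range.1 hk)
        _ = d := by simp
    refine ⟨F.card, fun k => {F.orderEmbOfFin rfl k}, fun k => ⟨_, rfl⟩, ?_, ?_, ?_⟩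
    · intro k l hkl i hi j hj
      rw [Finset.mem_singleton] at hi hj
      subst hi hj
      exact (F.orderEmbOfFin rfl).strictMono hkl
    · intro i hi; exact hcard.trans (h3 i hi)
    · ext i
      simp only [Finset.mem_biUnion, Finset.mem_univ, true_and, Finset.mem_singleton]
      constructor
      · intro hi
        have : i ∈ Set.range (F.orderEmbOfFin rfl) := by
          rw [Finset.range_orderEmbOfFin]; exact hi
        obtain ⟨k, hk⟩ := this
        exact ⟨k, hk.symm⟩
      · rintro ⟨k, rfl⟩
        exact Finset.orderEmbOfFin_mem F rfl k
  | succ n ih =>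
    obtain ⟨d, G, h1, h2, h3, h4⟩ := h
    refine ⟨d, fun k => G k ∩ F, fun k => ih ((h1 k k.2).subset Finset.inter_subset_left), ?_,
      h3, ?_⟩
    · intro k l hkl i hi j hj
      exact h2 k l hkl l.2 i (Finset.mem_inter.1 hi).1 j (Finset.mem_inter.1 hj).1
    · ext i
      simp only [Finset.mem_biUnion, Finset.mem_univ, true_and, Finset.mem_inter]
      constructor
      · intro hi
        obtain ⟨k, hk, hk2⟩ := Finset.mem_biUnion.1 (h4 hi)
        exact ⟨⟨k, Finset.mem_range.1 hk⟩, hk2, hi⟩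
      · rintro ⟨k, -, hi⟩; exact hi

/-- Subadditivity of a nonnegative mass over a union of finsets. -/
theorem sum_biUnion_le {ι : Type*} [DecidableEq ι] (c : ι → ℝ) (T : ℕ → Finset ι) (A : Finset ℕ)
    (hc : ∀ s, 0 ≤ c s) : ∑ s ∈ A.biUnion T, c s ≤ ∑ k ∈ A, ∑ s ∈ T k, c s := by
  classical
  induction A using Finset.induction_on with
  | empty => simp
  | insert k A hk ih =>
    rw [Finset.biUnion_insert, Finset.sum_insert hk]
    have h := Finset.sum_union_inter (s₁ := T k) (s₂ := A.biUnion T) (f := c)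
    have h0 : 0 ≤ ∑ s ∈ T k ∩ A.biUnion T, c s := Finset.sum_nonneg fun s _ => hc s
    linarith

/-! ### Special convex combinations -/

/-- `c` is an averaging of order `p + 1` over the indices `F` of a sequence of successive intervals
`[a s, b s]`: a convex combination whose left endpoints form an `SS (p + 1)` set, while any set of
indices whose right endpoints form an `SS p` set carries mass at most `ε`. -/
structure SCC (a b : ℕ → ℕ) (p : ℕ) (ε : ℝ) (F : Finset ℕ) (c : ℕ → ℝ) : Prop where
  nonneg : ∀ s, 0 ≤ c s
  zero : ∀ s, s ∉ F → c s = 0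
  sum_eq : ∑ s ∈ F, c s = 1
  adm : SS (p + 1) (F.image a)
  small : ∀ B ⊆ F, SS p (B.image b) → ∑ s ∈ B, c s ≤ ε

/-- Successive nonempty intervals `[a s, b s]`. -/
def Succ (a b : ℕ → ℕ) : Prop := ∀ s, a s ≤ b s ∧ b s < a (s + 1)

theorem Succ.lt {a b : ℕ → ℕ} (h : Succ a b) {s t : ℕ} (hst : s < t) : b s < a t := by
  induction t, hst using Nat.le_induction with
  | base => exact (h s).2
  | succ t _ ih => have := h t; omega

theorem Succ.strictMono_left {a b : ℕ → ℕ} (h : Succ a b) : StrictMono a :=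
  strictMono_nat_of_lt_succ fun s => (h s).1.trans_lt (h s).2

theorem Succ.strictMono_right {a b : ℕ → ℕ} (h : Succ a b) : StrictMono b :=
  strictMono_nat_of_lt_succ fun s => (h s).2.trans_le (h (s + 1)).1

theorem SCC_exists_zero {a b : ℕ → ℕ} (hab : Succ a b) {ε : ℝ} (hε : 0 < ε) (s0 : ℕ) :
    ∃ F c, (∀ s ∈ F, s0 ≤ s) ∧ SCC a b 0 ε F c := by
  obtain ⟨N, hN⟩ := exists_nat_gt (1 / ε)
  have hN0 : (0 : ℝ) < N := lt_trans (by positivity) hN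
  have hNpos : 0 < N := by exact_mod_cast hN0
  set s1 := max s0 N with hs1
  refine ⟨Finset.Ico s1 (s1 + N), fun s => if s ∈ Finset.Ico s1 (s1 + N) then (N : ℝ)⁻¹ else 0,
    ?_, ?_, ?_, ?_, ?_, ?_⟩
  · intro s hs; rw [Finset.mem_Ico] at hs; omega
  · intro s; split_ifs <;> positivity
  · intro s hs; simp only [if_neg hs]
  · rw [Finset.sum_congr rfl (fun s hs => if_pos hs)]
    simp [hN0.ne']
  · refine ⟨N, fun k => {a (s1 + k)}, ?_, ?_, ?_, ?_⟩
    · intro k _; exact (Finset.card_singleton _).le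
    · intro k l hkl _ i hi j hj
      rw [Finset.mem_singleton] at hi hj
      subst hi hj
      exact hab.strictMono_left (by omega)
    · intro i hi
      obtain ⟨s, hs, rfl⟩ := Finset.mem_image.1 hi
      rw [Finset.mem_Ico] at hs
      have := hab.strictMono_left.id_le s
      simp only [id] at this
      omega
    · intro i hi
      obtain ⟨s, hs, rfl⟩ := Finset.mem_image.1 hi
      rw [Finset.mem_Ico] at hs
      refine Finset.mem_biUnion.2 ⟨s - s1, Finset.mem_range.2 (by omega), ?_⟩
      rw [Finset.mem_singleton]
      congr 1; omega
  · intro B hB h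
    have hcard : B.card ≤ 1 := by
      rw [← Finset.card_image_of_injective B hab.strictMono_right.injective]; exact h
    have h2 : (N : ℝ)⁻¹ ≤ ε := by
      rw [inv_le_comm₀ hN0 hε]
      simpa using hN.le
    rw [Finset.sum_congr rfl (fun s hs => if_pos (hB hs))]
    rw [Finset.sum_const, nsmul_eq_mul]
    have : (B.card : ℝ) ≤ 1 := by exact_mod_cast hcard
    calc (B.card : ℝ) * (N : ℝ)⁻¹ ≤ 1 * (N : ℝ)⁻¹ := by gcongr
      _ ≤ ε := by linarith

/-- `N` successive averages of order `p + 1`, each much flatter than the position of the previous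
ones: an `SS (p + 1)` set can pick up at most one of them, up to `N * η`. -/
theorem SCC_exists_step {a b : ℕ → ℕ} (hab : Succ a b) {p : ℕ}
    (ih : ∀ ε : ℝ, 0 < ε → ∀ s0 : ℕ, ∃ F c, (∀ s ∈ F, s0 ≤ s) ∧ SCC a b p ε F c)
    {η : ℝ} (hη : 0 < η) (s0 : ℕ) (N : ℕ) :
    ∃ (F : Finset ℕ) (c : ℕ → ℝ) (G : ℕ → Finset ℕ), (∀ s ∈ F, s0 ≤ s) ∧ (∀ s, 0 ≤ c s) ∧
      (∀ s, s ∉ F → c s = 0) ∧ ∑ s ∈ F, c s = N ∧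
      (∀ k < N, SS (p + 1) (G k)) ∧ (∀ k l : ℕ, k < l → l < N → ∀ i ∈ G k, ∀ j ∈ G l, i < j) ∧
      F.image a = (Finset.range N).biUnion G ∧
      ∀ B ⊆ F, SS (p + 1) (B.image b) → ∑ s ∈ B, c s ≤ 1 + N * η := by
  classical
  induction N with
  | zero =>
    refine ⟨∅, fun _ => 0, fun _ => ∅, by simp, by simp, by simp, by simp, by simp, by simp,
      by simp, ?_⟩
    intro B _ _; simp
  | succ N ihN =>
    obtain ⟨F, c, G, hF0, hc, hc0, hsum, hG, hGlt, hFG, hsmall⟩ := ihN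
    set M := F.sup b with hM
    set S := max s0 (F.sup id + 1) with hS
    have hη' : 0 < η / (M + 1) := by positivity
    obtain ⟨F', c', hF'0, hscc⟩ := ih _ hη' S
    have hlt : ∀ s ∈ F, ∀ t ∈ F', s < t := by
      intro s hs t ht
      have h1 := hF'0 t ht
      have h2 : s ≤ F.sup id := Finset.le_sup (f := id) hs
      omega
    have hdisj : Disjoint F F' := by
      rw [Finset.disjoint_left]
      intro s hs hs'
      exact lt_irrefl _ (hlt s hs s hs')
    refine ⟨F ∪ F', fun s => c s + c' s, fun k => if k < N then G k else F'.image a,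
      ?_, ?_, ?_, ?_, ?_, ?_, ?_, ?_⟩
    · intro s hs
      rcases Finset.mem_union.1 hs with hs | hs
      · exact hF0 s hs
      · have := hF'0 s hs; omega
    · intro s; exact add_nonneg (hc s) (hscc.nonneg s)
    · intro s hs
      rw [Finset.mem_union, not_or] at hs
      simp only [hc0 s hs.1, hscc.zero s hs.2, add_zero]
    · rw [Finset.sum_add_distrib, ← Finset.sum_subset Finset.subset_union_left
        (fun s _ hs => hc0 s hs), ← Finset.sum_subset Finset.subset_union_right
        (fun s _ hs => hscc.zero s hs), hsum, hscc.sum_eq]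
      push_cast; ring
    · intro k hk
      dsimp only
      split_ifs with h
      · exact hG k h
      · exact hscc.adm
    · intro k l hkl hl i hi j hj
      dsimp only at hi hj
      rw [if_pos (show k < N by omega)] at hi
      split_ifs at hj with h
      · exact hGlt k l hkl h i hi j hj
      · have hi' : i ∈ F.image a := by
          rw [hFG]; exact Finset.mem_biUnion.2 ⟨k, Finset.mem_range.2 (by omega), hi⟩
        obtain ⟨s, hs, rfl⟩ := Finset.mem_image.1 hi'
        obtain ⟨t, ht, rfl⟩ := Finset.mem_image.1 hj
        exact hab.strictMono_left (hlt s hs t ht)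
    · rw [Finset.image_union, hFG, Finset.range_add_one, Finset.biUnion_insert, if_neg (lt_irrefl N),
        Finset.union_comm]
      congr 1
      refine Finset.biUnion_congr rfl fun k hk => ?_
      rw [if_pos (Finset.mem_range.1 hk)]
    · intro B hB hSS
      rw [Finset.sum_add_distrib]
      have e1 : ∑ s ∈ B, c s = ∑ s ∈ B ∩ F, c s := by
        refine (Finset.sum_subset Finset.inter_subset_left fun s hs hs' => hc0 s ?_).symm
        intro h; exact hs' (Finset.mem_inter.2 ⟨hs, h⟩)
      have e2 : ∑ s ∈ B, c' s = ∑ s ∈ B ∩ F', c' s := by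
        refine (Finset.sum_subset Finset.inter_subset_left fun s hs hs' => hscc.zero s ?_).symm
        intro h; exact hs' (Finset.mem_inter.2 ⟨hs, h⟩)
      rcases (B ∩ F).eq_empty_or_nonempty with hem | ⟨s, hs⟩
      · rw [e1, hem, Finset.sum_empty, zero_add, e2]
        have : ∑ s ∈ B ∩ F', c' s ≤ ∑ s ∈ F', c' s :=
          Finset.sum_le_sum_of_subset_of_nonneg Finset.inter_subset_right
            fun s _ _ => hscc.nonneg s
        rw [hscc.sum_eq] at this
        have : 0 ≤ ((N + 1 : ℕ) : ℝ) * η := by positivity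
        linarith
      · rw [e1, e2]
        have h1 : ∑ s ∈ B ∩ F, c s ≤ 1 + N * η :=
          hsmall _ Finset.inter_subset_right
            (hSS.subset (Finset.image_subset_image Finset.inter_subset_left))
        obtain ⟨d, D, hD1, hD2, hD3, hD4⟩ := hSS
        rw [Finset.mem_inter] at hs
        have hd : d ≤ M := (hD3 _ (Finset.mem_image_of_mem b hs.1)).trans
          (Finset.le_sup (f := b) hs.2)
        have h2 : ∑ s ∈ B ∩ F', c' s ≤ η := by
          calc ∑ s ∈ B ∩ F', c' s
              ≤ ∑ s ∈ (Finset.range d).biUnion (fun k => (B ∩ F').filter (fun s => b s ∈ D k)),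
                  c' s := by
                refine Finset.sum_le_sum_of_subset_of_nonneg ?_ fun s _ _ => hscc.nonneg s
                intro t ht
                obtain ⟨k, hk, hk2⟩ := Finset.mem_biUnion.1
                  (hD4 (Finset.mem_image_of_mem b (Finset.mem_inter.1 ht).1))
                exact Finset.mem_biUnion.2 ⟨k, hk, Finset.mem_filter.2 ⟨ht, hk2⟩⟩
            _ ≤ ∑ k ∈ Finset.range d, ∑ s ∈ (B ∩ F').filter (fun s => b s ∈ D k), c' s := by
                exact sum_biUnion_le _ _ _ hscc.nonneg
            _ ≤ ∑ k ∈ Finset.range d, η / (M + 1) := by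
                refine Finset.sum_le_sum fun k hk => hscc.small _ ?_ ?_
                · exact (Finset.filter_subset _ _).trans Finset.inter_subset_right
                · refine (hD1 k (Finset.mem_range.1 hk)).subset ?_
                  intro x hx
                  obtain ⟨t, ht, rfl⟩ := Finset.mem_image.1 hx
                  exact (Finset.mem_filter.1 ht).2
            _ = d * (η / (M + 1)) := by simp
            _ ≤ (M + 1) * (η / (M + 1)) := by
                have : (d : ℝ) ≤ M + 1 := by exact_mod_cast hd.trans (Nat.le_succ M)
                gcongr
            _ = η := by field_simp
        push_cast
        linarith

theorem SCC_exists {a b : ℕ → ℕ} (hab : Succ a b) (p : ℕ) :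
    ∀ ε : ℝ, 0 < ε → ∀ s0 : ℕ, ∃ F c, (∀ s ∈ F, s0 ≤ s) ∧ SCC a b p ε F c := by
  induction p with
  | zero => intro ε hε s0; exact SCC_exists_zero hab hε s0
  | succ p ih =>
    intro ε hε s0
    obtain ⟨N, hN⟩ := exists_nat_gt (2 / ε)
    have hN0 : (0 : ℝ) < N := lt_trans (by positivity) hN
    obtain ⟨F, c, G, h1, h2, h3, h4, h5, h6, h7, h8⟩ :=
      SCC_exists_step hab ih (half_pos hε) (max s0 N) N
    refine ⟨F, fun s => (N : ℝ)⁻¹ * c s, fun s hs => (le_max_left _ _).trans (h1 s hs),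
      ?_, ?_, ?_, ?_, ?_⟩
    · intro s; have := h2 s; positivity
    · intro s hs; simp only [h3 s hs, mul_zero]
    · rw [← Finset.mul_sum, h4, inv_mul_cancel₀ hN0.ne']
    · refine ⟨N, G, h5, h6, ?_, h7.le⟩
      intro i hi
      obtain ⟨s, hs, rfl⟩ := Finset.mem_image.1 hi
      exact ((le_max_right _ _).trans (h1 s hs)).trans (hab.strictMono_left.id_le s)
    · intro B hB hSS
      rw [← Finset.mul_sum]
      have := h8 B hB hSS
      have h2N : 2 < N * ε := by rwa [div_lt_iff₀ hε] at hN
      calc (N : ℝ)⁻¹ * ∑ s ∈ B, c s ≤ (N : ℝ)⁻¹ * (1 + N * (ε / 2)) := by gcongr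
        _ ≤ (N : ℝ)⁻¹ * (N * ε) := by gcongr; linarith
        _ = ε := by field_simp

/-! ### Pairing, supports -/

theorem evalPair_eq_sum (f x : c00) {S : Finset ℕ} (h : f.support ⊆ S) :
    evalPair f x = ∑ i ∈ S, f i * x i :=
  Finsupp.sum_of_support_subset f h _ (by simp)

theorem evalPair_eq_sum_right (f x : c00) : evalPair f x = ∑ i ∈ x.support, f i * x i := by
  rw [evalPair_eq_sum f x (S := f.support ∪ x.support) Finset.subset_union_left]
  refine (Finset.sum_subset Finset.subset_union_right fun i _ hi => ?_).symm
  rw [Finsupp.notMem_support_iff.1 hi, mul_zero]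

theorem evalPair_smul_left (r : ℝ) (f x : c00) : evalPair (r • f) x = r * evalPair f x := by
  simp only [evalPair_eq_sum_right, Finsupp.smul_apply, smul_eq_mul, Finset.mul_sum, mul_assoc]

theorem evalPair_neg_left (f x : c00) : evalPair (-f) x = -evalPair f x := by
  simp [evalPair_eq_sum_right]

theorem evalPair_sum_left {ι : Type*} (Q : Finset ι) (f : ι → c00) (x : c00) :
    evalPair (∑ q ∈ Q, f q) x = ∑ q ∈ Q, evalPair (f q) x := by
  simp only [evalPair_eq_sum_right, Finsupp.finsetSum_apply, Finset.sum_mul]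
  exact Finset.sum_comm

theorem evalPair_smul_right (r : ℝ) (f x : c00) : evalPair f (r • x) = r * evalPair f x := by
  simp only [evalPair_eq_sum f _ subset_rfl, Finsupp.smul_apply, smul_eq_mul, Finset.mul_sum]
  exact Finset.sum_congr rfl fun i _ => by ring

theorem evalPair_sum_right {ι : Type*} (Q : Finset ι) (f : c00) (x : ι → c00) :
    evalPair f (∑ q ∈ Q, x q) = ∑ q ∈ Q, evalPair f (x q) := by
  simp only [evalPair_eq_sum f _ subset_rfl, Finsupp.finsetSum_apply, Finset.mul_sum]
  exact Finset.sum_comm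

theorem evalPair_zero_left (x : c00) : evalPair 0 x = 0 := by simp [evalPair]

theorem evalPair_single (i : ℕ) (s : ℝ) (x : c00) : evalPair (Finsupp.single i s) x = s * x i := by
  simp [evalPair]

/-- A functional can only see a vector whose support it meets. -/
theorem exists_touch {f x : c00} (h : evalPair f x ≠ 0) : ∃ i, f i ≠ 0 ∧ x i ≠ 0 := by
  by_contra! hc
  apply h
  rw [evalPair_eq_sum_right]
  refine Finset.sum_eq_zero fun i _ => ?_
  by_cases hf : f i = 0
  · rw [hf, zero_mul]
  · rw [hc i hf, mul_zero]

theorem minSupp_le {x : c00} {i : ℕ} (h : x i ≠ 0) : minSupp x ≤ i := by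
  have hi : i ∈ x.support := Finsupp.mem_support_iff.2 h
  rw [minSupp, dif_pos ⟨i, hi⟩]
  exact Finset.min'_le _ _ hi

theorem le_maxSupp {x : c00} {i : ℕ} (h : x i ≠ 0) : i ≤ maxSupp x := by
  have hi : i ∈ x.support := Finsupp.mem_support_iff.2 h
  rw [maxSupp, dif_pos ⟨i, hi⟩]
  exact Finset.le_max' _ _ hi

theorem minSupp_ne {x : c00} (h : x.support.Nonempty) : x (minSupp x) ≠ 0 := by
  rw [minSupp, dif_pos h]
  exact Finsupp.mem_support_iff.1 (Finset.min'_mem _ _)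

theorem maxSupp_ne {x : c00} (h : x.support.Nonempty) : x (maxSupp x) ≠ 0 := by
  rw [maxSupp, dif_pos h]
  exact Finsupp.mem_support_iff.1 (Finset.max'_mem _ _)

theorem minSupp_le_maxSupp (x : c00) : minSupp x ≤ maxSupp x := by
  by_cases h : x.support.Nonempty
  · exact minSupp_le (maxSupp_ne h)
  · rw [minSupp, dif_neg h]; exact Nat.zero_le _

theorem maxSupp_le {x : c00} {b : ℕ} (h : ∀ i, x i ≠ 0 → i ≤ b) : maxSupp x ≤ b := by
  by_cases hx : x.support.Nonempty
  · exact h _ (maxSupp_ne hx)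
  · rw [maxSupp, dif_neg hx]; exact Nat.zero_le _

/-- The support of `x` is contained in the interval `[a, b]`. -/
def InI (x : c00) (a b : ℕ) : Prop := ∀ i, x i ≠ 0 → a ≤ i ∧ i ≤ b

theorem InI_self (x : c00) : InI x (minSupp x) (maxSupp x) :=
  fun _ h => ⟨minSupp_le h, le_maxSupp h⟩

theorem InI.mono {x : c00} {a b a' b' : ℕ} (h : InI x a b) (ha : a' ≤ a) (hb : b ≤ b') :
    InI x a' b' := fun i hi => ⟨ha.trans (h i hi).1, (h i hi).2.trans hb⟩

theorem InI.smul {x : c00} {a b : ℕ} (h : InI x a b) (r : ℝ) : InI (r • x) a b := by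
  intro i hi
  refine h i fun h0 => hi ?_
  simp [h0]

theorem InI.sum {ι : Type*} {Q : Finset ι} {x : ι → c00} {a b : ℕ} (h : ∀ q ∈ Q, InI (x q) a b) :
    InI (∑ q ∈ Q, x q) a b := by
  intro i hi
  rw [Finsupp.finsetSum_apply] at hi
  obtain ⟨q, hq, hne⟩ := Finset.exists_ne_zero_of_sum_ne_zero hi
  exact h q hq i hne

/-- Restriction of a functional to the interval `[a, b]`. -/
noncomputable def restr (f : c00) (a b : ℕ) : c00 := f.filter fun i => a ≤ i ∧ i ≤ b

theorem restr_apply_ne {f : c00} {a b i : ℕ} (h : restr f a b i ≠ 0) :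
    f i ≠ 0 ∧ a ≤ i ∧ i ≤ b := by
  rw [restr, Finsupp.filter_apply] at h
  split_ifs at h with h'
  · exact ⟨h, h'⟩
  · exact absurd rfl h

theorem InI_restr (f : c00) (a b : ℕ) : InI (restr f a b) a b :=
  fun _ h => (restr_apply_ne h).2

theorem evalPair_restr (f : c00) {x : c00} {a b : ℕ} (hx : InI x a b) :
    evalPair (restr f a b) x = evalPair f x := by
  rw [evalPair_eq_sum_right, evalPair_eq_sum_right]
  refine Finset.sum_congr rfl fun i hi => ?_
  rw [restr, Finsupp.filter_apply, if_pos (hx i (Finsupp.mem_support_iff.1 hi))]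

theorem restr_smul_sum {ι : Type*} (r : ℝ) (Q : Finset ι) (f : ι → c00) (a b : ℕ) :
    restr (r • ∑ q ∈ Q, f q) a b = r • ∑ q ∈ Q, restr (f q) a b := by
  ext i
  simp only [restr, Finsupp.filter_apply, Finsupp.smul_apply, Finsupp.finsetSum_apply]
  split_ifs <;> simp

/-- The `ℓ₁` norm on `c₀₀`. -/
noncomputable def ell1 (x : c00) : ℝ := ∑ i ∈ x.support, |x i|

theorem ell1_nonneg (x : c00) : 0 ≤ ell1 x := Finset.sum_nonneg fun _ _ => abs_nonneg _

theorem abs_evalPair_le {f : c00} {C : ℝ} (h : ∀ i, |f i| ≤ C) (x : c00) :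
    |evalPair f x| ≤ C * ell1 x := by
  rw [evalPair_eq_sum_right, ell1, Finset.mul_sum]
  refine (Finset.abs_sum_le_sum_abs _ _).trans (Finset.sum_le_sum fun i _ => ?_)
  rw [abs_mul]
  exact mul_le_mul_of_nonneg_right (h i) (abs_nonneg _)

/-! ### The norming set -/

/-- `f` precedes `g`, and the weight `v` of `g` beats the support of `f`. -/
def Before (f g : c00) (v : ℕ∞) : Prop := maxSupp f < minSupp g ∧ (maxSupp f : ℕ∞) < v

/-- The data of a very fast growing, `S_n`-admissible sequence of weighted functionals. -/
structure Op (P : IWParams) (n d : ℕ) (f : Fin d → c00) (w : Fin d → ℕ∞) : Prop where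
  mem : ∀ q, WT P (f q) (w q)
  ne : ∀ q, (f q).support.Nonempty
  before : ∀ q r, q < r → Before (f q) (f r) (w r)
  adm : SS n (Finset.univ.image fun q => minSupp (f q))

theorem IWParams.n_pos (P : IWParams) (j : ℕ) : 1 ≤ P.n j := by
  have := P.n_mono.monotone (Nat.zero_le j)
  rw [P.n_first] at this; exact this

theorem IWParams.two_le_m (P : IWParams) (j : ℕ) : 2 ≤ P.m j := by
  have := P.m_mono.monotone (Nat.zero_le j)
  rw [P.m_first] at this; exact this

theorem IWParams.m_pos (P : IWParams) (j : ℕ) : (0 : ℝ) < P.m j := by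
  have := P.two_le_m j
  exact_mod_cast (by omega : 0 < P.m j)

theorem IWParams.two_le_mR (P : IWParams) (j : ℕ) : (2 : ℝ) ≤ P.m j := by
  exact_mod_cast P.two_le_m j

/-- Induction on the norming set; compared with the bare recursor, the very fast growing condition
is available for all pairs rather than consecutive ones. -/
theorem WT.ind {P : IWParams} {M : c00 → ℕ∞ → Prop}
    (hu : ∀ i s, (s = 1 ∨ s = -1) → M (Finsupp.single i s) ⊤)
    (ho : ∀ j d f w, Op P (P.n j) d f w → (∀ q, M (f q) (w q)) →
      M ((P.m j : ℝ)⁻¹ • ∑ q, f q) ((P.m j : ℕ) : ℕ∞))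
    {f : c00} {w : ℕ∞} (h : WT P f w) : M f w := by
  induction h with
  | unit i s hs => exact hu i s hs
  | op j d f w hf hadm hvfg ih =>
    refine ho j d f w ⟨hf, hadm.1, ?_, SS_of_Schreier hadm.2.2⟩ ih
    intro q r hqr
    refine ⟨hadm.2.1 q r hqr, ?_⟩
    have hqr' : (q : ℕ) < r := hqr
    have h0 : (r : ℕ) - 1 < d := by omega
    set r' : Fin d := ⟨(r : ℕ) - 1, h0⟩ with hr'
    have h1 := hvfg r' r (by simp only [hr']; omega)
    refine lt_of_le_of_lt ?_ h1
    rcases lt_or_eq_of_le (show (q : ℕ) ≤ (r : ℕ) - 1 by omega) with h2 | h2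
    · have := hadm.2.1 q r' (show (q : ℕ) < (r : ℕ) - 1 from h2)
      have h3 := minSupp_le_maxSupp (f r')
      unfold Blocks at this
      exact_mod_cast (by omega : maxSupp (f q) ≤ maxSupp (f r'))
    · have : q = r' := Fin.ext h2
      rw [this]

/-- Every element of the norming set is a signed unit functional or an average of an `Op`. -/
theorem WT.cases' {P : IWParams} {f : c00} {w : ℕ∞} (h : WT P f w) :
    (∃ i s, (s = 1 ∨ s = -1) ∧ f = Finsupp.single i s ∧ w = ⊤) ∨
    ∃ j d g v, Op P (P.n j) d g v ∧ f = (P.m j : ℝ)⁻¹ • ∑ q, g q ∧ w = ((P.m j : ℕ) : ℕ∞) := by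
  refine WT.ind (M := fun f w =>
    (∃ i s, (s = 1 ∨ s = -1) ∧ f = Finsupp.single i s ∧ w = ⊤) ∨
    ∃ j d g v, Op P (P.n j) d g v ∧ f = (P.m j : ℝ)⁻¹ • ∑ q, g q ∧ w = ((P.m j : ℕ) : ℕ∞))
    ?_ ?_ h
  · intro i s hs; exact Or.inl ⟨i, s, hs, rfl, rfl⟩
  · intro j d f w hop _; exact Or.inr ⟨j, d, f, w, hop, rfl, rfl⟩

/-- Building a weighted functional from a family indexed by an arbitrary finset. -/
theorem WT_of_finset {P : IWParams} {ι : Type*} (j : ℕ) (Q : Finset ι) (f : ι → c00) (w : ι → ℕ∞)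
    (hf : ∀ q ∈ Q, WT P (f q) (w q)) (hne : ∀ q ∈ Q, (f q).support.Nonempty)
    (hb : ∀ q ∈ Q, ∀ r ∈ Q, q ≠ r → Before (f q) (f r) (w r) ∨ Before (f r) (f q) (w q))
    (hS : SS (P.n j) (Q.image fun q => minSupp (f q))) :
    WT P ((P.m j : ℝ)⁻¹ • ∑ q ∈ Q, f q) ((P.m j : ℕ) : ℕ∞) := by
  classical
  have key : ∀ q ∈ Q, ∀ r ∈ Q, minSupp (f q) < minSupp (f r) → Before (f q) (f r) (w r) := by
    intro q hq r hr hlt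
    rcases hb q hq r hr (by rintro rfl; omega) with h | h
    · exact h
    · have := h.1; have := minSupp_le_maxSupp (f r); omega
  have hinj : ∀ q ∈ Q, ∀ r ∈ Q, minSupp (f q) = minSupp (f r) → q = r := by
    intro q hq r hr heq
    by_contra hne'
    rcases hb q hq r hr hne' with h | h
    · have := h.1; have := minSupp_le_maxSupp (f q); omega
    · have := h.1; have := minSupp_le_maxSupp (f r); omega
  set M := Q.image fun q => minSupp (f q) with hM
  set e := M.orderEmbOfFin rfl with he
  have hex : ∀ k : Fin M.card, ∃ q ∈ Q, minSupp (f q) = e k := by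
    intro k
    have := Finset.orderEmbOfFin_mem M rfl k
    exact Finset.mem_image.1 this
  choose g hgQ hg using hex
  have hlt : ∀ k l : Fin M.card, k < l → Before (f (g k)) (f (g l)) (w (g l)) := by
    intro k l hkl
    refine key _ (hgQ k) _ (hgQ l) ?_
    rw [hg, hg]
    exact e.strictMono hkl
  have hsum : ∑ k, f (g k) = ∑ q ∈ Q, f q := by
    refine Finset.sum_bij (fun k _ => g k) (fun k _ => hgQ k) ?_ ?_ (fun _ _ => rfl)
    · intro k _ l _ hkl
      apply e.injective
      rw [← hg, ← hg, hkl]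
    · intro q hq
      have : minSupp (f q) ∈ Set.range e := by
        rw [he, Finset.range_orderEmbOfFin]
        exact Finset.mem_image_of_mem (fun q => minSupp (f q)) hq
      obtain ⟨k, hk⟩ := this
      refine ⟨k, Finset.mem_univ _, hinj _ (hgQ k) _ hq ?_⟩
      rw [hg, hk]
  have himg : (Finset.univ.image fun k => minSupp (f (g k))) ⊆ M := by
    intro x hx
    obtain ⟨k, -, rfl⟩ := Finset.mem_image.1 hx
    exact Finset.mem_image_of_mem (fun q => minSupp (f q)) (hgQ k)
  rw [← hsum]
  refine WT.op j M.card (fun k => f (g k)) (fun k => w (g k)) (fun k => hf _ (hgQ k))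
    ⟨fun k => hne _ (hgQ k), fun k l hkl => (hlt k l hkl).1, ?_⟩ ?_
  · obtain ⟨n', hn'⟩ : ∃ n', P.n j = n' + 1 := ⟨P.n j - 1, by have := P.n_pos j; omega⟩
    rw [hn'] at hS ⊢
    exact Schreier_of_SS (hS.subset himg)
  · intro q r hqr
    exact (hlt q r (show (q : ℕ) < r by omega)).2

/-- Supports of an `Op` family are disjoint, so a coordinate of the sum is a coordinate of one of
its terms. -/
theorem Op.sum_apply_abs_le {P : IWParams} {n d : ℕ} {f : Fin d → c00} {w : Fin d → ℕ∞}
    (h : Op P n d f w) {C : ℝ} (hC : 0 ≤ C) {i : ℕ} (hi : ∀ q, |f q i| ≤ C) :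
    |(∑ q, f q) i| ≤ C := by
  rw [Finsupp.finsetSum_apply]
  by_cases hex : ∃ q, f q i ≠ 0
  · obtain ⟨q, hq⟩ := hex
    rw [Finset.sum_eq_single q]
    · exact hi q
    · intro r _ hrq
      by_contra hr
      rcases lt_or_gt_of_ne hrq with hlt | hlt
      · have := (h.before r q hlt).1
        have := le_maxSupp hr
        have := minSupp_le hq
        omega
      · have := (h.before q r hlt).1
        have := le_maxSupp hq
        have := minSupp_le hr
        omega
    · simp
  · push Not at hex
    rw [Finset.sum_eq_zero fun q _ => hex q, abs_zero]
    exact hC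

theorem WT.abs_le_one {P : IWParams} {f : c00} {w : ℕ∞} (h : WT P f w) : ∀ i, |f i| ≤ 1 := by
  refine WT.ind (M := fun f _ => ∀ i, |f i| ≤ 1) ?_ ?_ h
  · intro i s hs k
    rw [Finsupp.single_apply]
    split_ifs
    · rcases hs with rfl | rfl <;> simp
    · simp
  · intro j d f w hop ih i
    have h1 := hop.sum_apply_abs_le zero_le_one fun q => ih q i
    rw [Finsupp.smul_apply, smul_eq_mul, abs_mul, abs_inv, Nat.abs_cast]
    have h2 := P.two_le_mR j
    have h3 : (P.m j : ℝ)⁻¹ ≤ 1 := inv_le_one_of_one_le₀ (by linarith)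
    have h4 : 0 ≤ (P.m j : ℝ)⁻¹ := by positivity
    calc (P.m j : ℝ)⁻¹ * |(∑ q, f q) i| ≤ 1 * 1 := by gcongr
      _ = 1 := one_mul 1

theorem WT.abs_le_inv {P : IWParams} {f : c00} {j : ℕ} (h : WT P f ((P.m j : ℕ) : ℕ∞)) (i : ℕ) :
    |f i| ≤ (P.m j : ℝ)⁻¹ := by
  rcases h.cases' with ⟨_, _, _, _, hw⟩ | ⟨j', d, g, v, hop, rfl, hw⟩
  · exact absurd hw (ENat.natCast_ne_top _)
  · have hm : P.m j = P.m j' := by exact_mod_cast hw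
    rw [hm, Finsupp.smul_apply, smul_eq_mul, abs_mul, abs_inv, Nat.abs_cast]
    have h1 := hop.sum_apply_abs_le zero_le_one (i := i) fun q => (hop.mem q).abs_le_one i
    have h4 : 0 ≤ (P.m j' : ℝ)⁻¹ := by positivity
    calc (P.m j' : ℝ)⁻¹ * |(∑ q, g q) i| ≤ (P.m j' : ℝ)⁻¹ * 1 := by gcongr
      _ = _ := mul_one _

theorem minSupp_neg (f : c00) : minSupp (-f) = minSupp f := by simp [minSupp]

theorem maxSupp_neg (f : c00) : maxSupp (-f) = maxSupp f := by simp [maxSupp]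

theorem WT.neg {P : IWParams} {f : c00} {w : ℕ∞} (h : WT P f w) : WT P (-f) w := by
  refine WT.ind (M := fun f w => WT P (-f) w) ?_ ?_ h
  · intro i s hs
    rw [← Finsupp.single_neg]
    refine WT.unit i _ ?_
    rcases hs with rfl | rfl <;> simp
  · intro j d f w hop ih
    rw [← smul_neg, ← Finset.sum_neg_distrib]
    refine WT_of_finset j Finset.univ (fun q => -f q) w (fun q _ => ih q) ?_ ?_ ?_
    · intro q _; rw [Finsupp.support_neg]; exact hop.ne q
    · intro q _ r _ hqr
      simp only [Before, minSupp_neg, maxSupp_neg]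
      rcases lt_or_gt_of_ne hqr with hlt | hlt
      · exact Or.inl (hop.before q r hlt)
      · exact Or.inr (hop.before r q hlt)
    · simp only [minSupp_neg]; exact hop.adm

theorem Before.mono {f g f' g' : c00} {v : ℕ∞} (h : Before f g v) (hf : maxSupp f' ≤ maxSupp f)
    (hg : minSupp g ≤ minSupp g') : Before f' g' v :=
  ⟨by have := h.1; omega, lt_of_le_of_lt (by exact_mod_cast hf) h.2⟩

/-- The norming set is closed under restriction to intervals, weights being preserved. -/
theorem WT.restr {P : IWParams} {f : c00} {w : ℕ∞} (h : WT P f w) (a b : ℕ) :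
    restr f a b = 0 ∨ WT P (restr f a b) w := by
  classical
  refine WT.ind (M := fun f w => _root_.restr f a b = 0 ∨ WT P (_root_.restr f a b) w) ?_ ?_ h
  · intro i s hs
    rw [_root_.restr]
    by_cases hi : a ≤ i ∧ i ≤ b
    · right
      rw [Finsupp.filter_single_of_pos (p := fun i => a ≤ i ∧ i ≤ b) hi]
      exact WT.unit i s hs
    · left
      exact Finsupp.filter_single_of_neg (p := fun i => a ≤ i ∧ i ≤ b) hi
  · intro j d f w hop ih
    right
    rw [restr_smul_sum]
    set Q : Finset (Fin d) := Finset.univ.filter fun q => _root_.restr (f q) a b ≠ 0 with hQ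
    have hsum : ∑ q, _root_.restr (f q) a b = ∑ q ∈ Q, _root_.restr (f q) a b := by
      rw [hQ, Finset.sum_filter_ne_zero]
    rw [hsum]
    have hne : ∀ q ∈ Q, (_root_.restr (f q) a b).support.Nonempty := by
      intro q hq
      exact Finsupp.support_nonempty_iff.2 (Finset.mem_filter.1 hq).2
    have hmin : ∀ q ∈ Q, minSupp (f q) ≤ minSupp (_root_.restr (f q) a b) := fun q hq =>
      minSupp_le (restr_apply_ne (minSupp_ne (hne q hq))).1
    have hmax : ∀ q ∈ Q, maxSupp (_root_.restr (f q) a b) ≤ maxSupp (f q) := fun q hq =>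
      le_maxSupp (restr_apply_ne (maxSupp_ne (hne q hq))).1
    refine WT_of_finset j Q _ w ?_ hne ?_ ?_
    · intro q hq
      exact (ih q).resolve_left (Finset.mem_filter.1 hq).2
    · intro q hq r hr hqr
      rcases lt_or_gt_of_ne hqr with hlt | hlt
      · exact Or.inl ((hop.before q r hlt).mono (hmax q hq) (hmin r hr))
      · exact Or.inr ((hop.before r q hlt).mono (hmax r hr) (hmin q hq))
    · refine SS.spread Q (fun q => minSupp (f q)) _
        (hop.adm.subset (Finset.image_subset_image (Finset.subset_univ _))) hmin ?_ ?_
      · intro q hq r hr hlt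
        have hqr : q < r := by
          by_contra hc
          rcases lt_or_eq_of_le (not_lt.1 hc) with h1 | h1
          · have := (hop.before r q h1).1
            have := minSupp_le_maxSupp (f r)
            omega
          · subst h1; omega
        have h1 := (hop.before q r hqr).1
        have h2 := hmax q hq
        have h3 := hmin r hr
        have h4 := minSupp_le_maxSupp (_root_.restr (f q) a b)
        omega
      · intro q hq r hr heq
        have hqr : q = r := by
          by_contra hc
          rcases lt_or_gt_of_ne hc with h1 | h1
          · have := (hop.before q r h1).1
            have := minSupp_le_maxSupp (f q)
            omega
          · have := (hop.before r q h1).1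
            have := minSupp_le_maxSupp (f r)
            omega
        rw [hqr]

theorem Op.min_lt {P : IWParams} {n d : ℕ} {f : Fin d → c00} {w : Fin d → ℕ∞}
    (h : Op P n d f w) {q r : Fin d} (hqr : q < r) : minSupp (f q) < minSupp (f r) := by
  have := (h.before q r hqr).1
  have := minSupp_le_maxSupp (f q)
  omega

/-- Given a threshold `R`, the functionals of an `Op` either all end before `R`, or, apart from one
index `q₀`, those before `q₀` end before `R` and those after `q₀` have weight beyond `R`. -/
theorem Op.peel {P : IWParams} {n d : ℕ} {f : Fin d → c00} {w : Fin d → ℕ∞}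
    (h : Op P n d f w) (R : ℕ) :
    (∀ q, maxSupp (f q) < R) ∨ ∃ q0, R ≤ maxSupp (f q0) ∧ (∀ q < q0, maxSupp (f q) < R) ∧
      ∀ q, q0 < q → (R : ℕ∞) < w q := by
  classical
  by_cases hex : ∃ q, R ≤ maxSupp (f q)
  · right
    obtain ⟨q0, hq0, hmin⟩ := Finset.exists_min_image
      (Finset.univ.filter fun q => R ≤ maxSupp (f q)) id
      (by obtain ⟨q, hq⟩ := hex; exact ⟨q, by simp [hq]⟩)
    have hq0' := (Finset.mem_filter.1 hq0).2
    refine ⟨q0, hq0', ?_, ?_⟩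
    · intro q hq
      by_contra hc
      have := hmin q (by simp only [Finset.mem_filter, Finset.mem_univ, true_and]; omega)
      exact absurd hq (not_lt.2 this)
    · intro q hq
      exact lt_of_le_of_lt (by exact_mod_cast hq0') (h.before q0 q hq).2
  · left
    push Not at hex
    exact hex

/-! ### The norm -/

theorem tNorm_bdd (P : IWParams) (x : c00) :
    BddAbove {r | ∃ f, (∃ w, WT P f w) ∧ r = evalPair f x} := by
  refine ⟨1 * ell1 x, ?_⟩
  rintro r ⟨f, ⟨w, hw⟩, rfl⟩
  exact (le_abs_self _).trans (abs_evalPair_le hw.abs_le_one x)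

theorem tNorm_nonempty (P : IWParams) (x : c00) :
    {r | ∃ f, (∃ w, WT P f w) ∧ r = evalPair f x}.Nonempty :=
  ⟨_, _, ⟨⊤, WT.unit 0 1 (Or.inl rfl)⟩, rfl⟩

theorem WT.le_tNorm {P : IWParams} {f : c00} {w : ℕ∞} (h : WT P f w) (x : c00) :
    evalPair f x ≤ tNorm P x :=
  le_csSup (tNorm_bdd P x) ⟨f, ⟨w, h⟩, rfl⟩

theorem WT.abs_le_tNorm {P : IWParams} {f : c00} {w : ℕ∞} (h : WT P f w) (x : c00) :
    |evalPair f x| ≤ tNorm P x := by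
  refine abs_le.2 ⟨?_, h.le_tNorm x⟩
  have := h.neg.le_tNorm x
  rw [evalPair_neg_left] at this
  linarith

theorem tNorm_le {P : IWParams} {x : c00} {C : ℝ} (h : ∀ f w, WT P f w → |evalPair f x| ≤ C) :
    tNorm P x ≤ C := by
  refine csSup_le (tNorm_nonempty P x) ?_
  rintro r ⟨f, ⟨w, hw⟩, rfl⟩
  exact (le_abs_self _).trans (h f w hw)

theorem exists_lt_of_lt_tNorm {P : IWParams} {x : c00} {C : ℝ} (h : C < tNorm P x) :
    ∃ f w, WT P f w ∧ C < evalPair f x := by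
  obtain ⟨r, ⟨f, ⟨w, hw⟩, rfl⟩, hr⟩ := exists_lt_of_lt_csSup (tNorm_nonempty P x) h
  exact ⟨f, w, hw, hr⟩

theorem tNorm_nonneg (P : IWParams) (x : c00) : 0 ≤ tNorm P x :=
  (abs_nonneg _).trans ((WT.unit (P := P) 0 1 (Or.inl rfl)).abs_le_tNorm x)

theorem tNorm_smul_le {P : IWParams} {x : c00} {r : ℝ} (hr : 0 ≤ r) :
    tNorm P (r • x) ≤ r * tNorm P x := by
  refine tNorm_le fun f w h => ?_
  rw [evalPair_smul_right, abs_mul, abs_of_nonneg hr]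
  exact mul_le_mul_of_nonneg_left (h.abs_le_tNorm x) hr

/-- Convex combinations of vectors of norm at most one have norm at most one. -/
theorem tNorm_convex_le {P : IWParams} {F : Finset ℕ} {c : ℕ → ℝ} {u : ℕ → c00}
    (hc : ∀ s, 0 ≤ c s) (hsum : ∑ s ∈ F, c s ≤ 1) (hu : ∀ s ∈ F, tNorm P (u s) ≤ 1) :
    tNorm P (∑ s ∈ F, c s • u s) ≤ 1 := by
  refine tNorm_le fun f w h => ?_
  rw [evalPair_sum_right]
  calc |∑ s ∈ F, evalPair f (c s • u s)| ≤ ∑ s ∈ F, |evalPair f (c s • u s)| :=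
        Finset.abs_sum_le_sum_abs _ _
    _ ≤ ∑ s ∈ F, c s := Finset.sum_le_sum fun s hs => by
        rw [evalPair_smul_right, abs_mul, abs_of_nonneg (hc s)]
        have := (h.abs_le_tNorm (u s)).trans (hu s hs)
        have := mul_le_mul_of_nonneg_left this (hc s)
        linarith
    _ ≤ 1 := hsum

/-! ### Functionals acting on special convex combinations -/

/-- The basic estimate: a family of successive functionals acts on an average of blocks almost like
a single one. Blocks in which some functional starts, and blocks on which some functional is large,
are counted by injections into the family (`hH`); on every other block at most one functional acts,
with value at most `η`. -/
theorem key_estimate {P : IWParams} {n d : ℕ} {f : Fin d → c00} {w : Fin d → ℕ∞}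
    (h : Op P n d f w) (Q : Finset (Fin d)) {a b : ℕ → ℕ} (hab : Succ a b) {u : ℕ → c00}
    {F : Finset ℕ} {c : ℕ → ℝ} {ε η C : ℝ} (hu : ∀ s ∈ F, InI (u s) (a s) (b s))
    (hc : ∀ s, 0 ≤ c s) (hsum : ∑ s ∈ F, c s ≤ 1)
    (hH : ∀ B ⊆ F, ∀ σ : ℕ → Fin d, (∀ s ∈ B, σ s ∈ Q) →
      (∀ s ∈ B, ∀ t ∈ B, s < t → σ s < σ t) → (∀ s ∈ B, minSupp (f (σ s)) ≤ b s) →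
      ∑ s ∈ B, c s ≤ ε)
    (hC0 : 0 ≤ C) (hη0 : 0 ≤ η) (hε0 : 0 ≤ ε)
    (hC : ∀ s ∈ F, |∑ q ∈ Q, evalPair (f q) (u s)| ≤ C)
    (h1 : ∀ q ∈ Q, ∀ s ∈ F, |evalPair (f q) (u s)| ≤ 1)
    (hη : ∀ q ∈ Q, ∀ s ∈ F, ∀ t ∈ F, s ≠ t →
      |evalPair (f q) (u s)| ≤ η ∨ |evalPair (f q) (u t)| ≤ η) :
    |∑ q ∈ Q, evalPair (f q) (∑ s ∈ F, c s • u s)| ≤ ε * C + ε + η := by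
  classical
  rcases Q.eq_empty_or_nonempty with rfl | ⟨qd, hqd⟩
  · simp only [Finset.sum_empty, abs_zero]; positivity
  set B1 := F.filter fun s => ∃ q ∈ Q, a s < minSupp (f q) ∧ minSupp (f q) ≤ b s with hB1
  set B2 := F.filter fun s => s ∉ B1 ∧ ∃ q ∈ Q, η < |evalPair (f q) (u s)| with hB2
  have m1 : ∑ s ∈ B1, c s ≤ ε := by
    have hex : ∀ s : ℕ, ∃ q : Fin d, s ∈ B1 → q ∈ Q ∧ a s < minSupp (f q) ∧ minSupp (f q) ≤ b s := by
      intro s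
      by_cases hs : s ∈ B1
      · obtain ⟨q, hq⟩ := (Finset.mem_filter.1 hs).2
        exact ⟨q, fun _ => hq⟩
      · exact ⟨qd, fun h => absurd h hs⟩
    choose σ hσ using hex
    refine hH B1 (Finset.filter_subset _ _) σ (fun s hs => (hσ s hs).1) ?_ fun s hs => (hσ s hs).2.2
    intro s hs t ht hst
    have e1 := hσ s hs
    have e2 := hσ t ht
    have e3 := hab.lt hst
    by_contra hc'
    rcases lt_or_eq_of_le (not_lt.1 hc') with h' | h'
    · have := h.min_lt h'; omega
    · rw [h'] at e2; omega
  have m2 : ∑ s ∈ B2, c s ≤ ε := by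
    have hex : ∀ s : ℕ, ∃ q : Fin d, s ∈ B2 → q ∈ Q ∧ η < |evalPair (f q) (u s)| := by
      intro s
      by_cases hs : s ∈ B2
      · obtain ⟨q, hq⟩ := (Finset.mem_filter.1 hs).2.2
        exact ⟨q, fun _ => hq⟩
      · exact ⟨qd, fun h => absurd h hs⟩
    choose σ hσ using hex
    have htouch : ∀ s ∈ B2, ∃ i, f (σ s) i ≠ 0 ∧ u s i ≠ 0 := by
      intro s hs
      apply exists_touch
      intro h0
      have := (hσ s hs).2
      rw [h0, abs_zero] at this
      linarith
    refine hH B2 (Finset.filter_subset _ _) σ (fun s hs => (hσ s hs).1) ?_ ?_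
    · intro s hs t ht hst
      have hsF := (Finset.mem_filter.1 hs).1
      have htF := (Finset.mem_filter.1 ht).1
      obtain ⟨i, hi1, hi2⟩ := htouch s hs
      obtain ⟨k, hk1, hk2⟩ := htouch t ht
      have e1 := hu s hsF i hi2
      have e2 := hu t htF k hk2
      have e3 := hab.lt hst
      by_contra hc'
      rcases lt_or_eq_of_le (not_lt.1 hc') with h' | h'
      · have := (h.before _ _ h').1
        have := le_maxSupp hk1
        have := minSupp_le hi1
        omega
      · have h5 := (hσ s hs).2
        have h6 := (hσ t ht).2
        rw [h'] at h6
        rcases hη _ (hσ s hs).1 s hsF t htF hst.ne with h7 | h7 <;> linarith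
    · intro s hs
      obtain ⟨i, hi1, hi2⟩ := htouch s hs
      exact (minSupp_le hi1).trans (hu s (Finset.mem_filter.1 hs).1 i hi2).2
  have hpt : ∀ s ∈ F, |∑ q ∈ Q, evalPair (f q) (u s)| ≤
      (if s ∈ B1 then C else 0) + (if s ∈ B2 then 1 else 0) + η := by
    intro s hs
    by_cases hs1 : s ∈ B1
    · rw [if_pos hs1]
      have : (0 : ℝ) ≤ if s ∈ B2 then 1 else 0 := by split_ifs <;> norm_num
      have := hC s hs
      linarith
    rw [if_neg hs1]
    by_cases hex : ∃ q ∈ Q, evalPair (f q) (u s) ≠ 0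
    · obtain ⟨q, hq, hne⟩ := hex
      have huniq : ∀ q r : Fin d, q ∈ Q → r ∈ Q → q < r → evalPair (f q) (u s) ≠ 0 →
          evalPair (f r) (u s) ≠ 0 → False := by
        intro q r hq hr hqr h2 h3
        obtain ⟨i, hi1, hi2⟩ := exists_touch h2
        obtain ⟨k, hk1, hk2⟩ := exists_touch h3
        refine hs1 (Finset.mem_filter.2 ⟨hs, r, hr, ?_, (minSupp_le hk1).trans (hu s hs k hk2).2⟩)
        have := (h.before q r hqr).1
        have := le_maxSupp hi1
        have := (hu s hs i hi2).1
        omega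
      rw [Finset.sum_eq_single_of_mem q hq]
      · by_cases hlarge : η < |evalPair (f q) (u s)|
        · have hs2 : s ∈ B2 := Finset.mem_filter.2 ⟨hs, hs1, q, hq, hlarge⟩
          rw [if_pos hs2]
          have := h1 q hq s hs
          linarith
        · have : (0 : ℝ) ≤ if s ∈ B2 then 1 else 0 := by split_ifs <;> norm_num
          linarith
      · intro r hr hrq
        by_contra hne'
        rcases lt_or_gt_of_ne hrq with h' | h'
        · exact huniq r q hr hq h' hne' hne
        · exact huniq q r hq hr h' hne hne'
    · push Not at hex
      rw [Finset.sum_eq_zero hex, abs_zero]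
      split_ifs <;> linarith
  have e0 : ∑ q ∈ Q, evalPair (f q) (∑ s ∈ F, c s • u s)
      = ∑ s ∈ F, c s * ∑ q ∈ Q, evalPair (f q) (u s) := by
    simp only [evalPair_sum_right, evalPair_smul_right, Finset.mul_sum]
    exact Finset.sum_comm
  have s1 : ∑ s ∈ F, c s * (if s ∈ B1 then C else 0) = C * ∑ s ∈ B1, c s := by
    rw [Finset.mul_sum, ← Finset.sum_subset (Finset.filter_subset _ _ : B1 ⊆ F)
      (fun s _ hs => by rw [if_neg hs, mul_zero])]
    exact Finset.sum_congr rfl fun s hs => by rw [if_pos hs, mul_comm]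
  have s2 : ∑ s ∈ F, c s * (if s ∈ B2 then 1 else 0) = ∑ s ∈ B2, c s := by
    rw [← Finset.sum_subset (Finset.filter_subset _ _ : B2 ⊆ F)
      (fun s _ hs => by rw [if_neg hs, mul_zero])]
    exact Finset.sum_congr rfl fun s hs => by rw [if_pos hs, mul_one]
  rw [e0]
  calc |∑ s ∈ F, c s * ∑ q ∈ Q, evalPair (f q) (u s)|
      ≤ ∑ s ∈ F, |c s * ∑ q ∈ Q, evalPair (f q) (u s)| := Finset.abs_sum_le_sum_abs _ _
    _ ≤ ∑ s ∈ F, c s * ((if s ∈ B1 then C else 0) + (if s ∈ B2 then 1 else 0) + η) :=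
        Finset.sum_le_sum fun s hs => by
          rw [abs_mul, abs_of_nonneg (hc s)]
          exact mul_le_mul_of_nonneg_left (hpt s hs) (hc s)
    _ = C * ∑ s ∈ B1, c s + ∑ s ∈ B2, c s + (∑ s ∈ F, c s) * η := by
        simp only [mul_add, Finset.sum_add_distrib, s1, s2, Finset.sum_mul]
    _ ≤ C * ε + ε + 1 * η := by gcongr
    _ = ε * C + ε + η := by ring

/-- Transfer of admissibility from the functionals to the blocks in which they start. -/
theorem Op.SS_image {P : IWParams} {n d : ℕ} {f : Fin d → c00} {w : Fin d → ℕ∞}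
    (h : Op P n d f w) {b : ℕ → ℕ} (hb : StrictMono b) {B : Finset ℕ} {σ : ℕ → Fin d}
    (hσ : ∀ s ∈ B, ∀ t ∈ B, s < t → σ s < σ t) (hle : ∀ s ∈ B, minSupp (f (σ s)) ≤ b s)
    {n' : ℕ} {T : Finset ℕ} (hT : SS n' T) (hBT : ∀ s ∈ B, minSupp (f (σ s)) ∈ T) :
    SS n' (B.image b) := by
  have hlt : ∀ s ∈ B, ∀ t ∈ B, s < t → minSupp (f (σ s)) < minSupp (f (σ t)) :=
    fun s hs t ht hst => h.min_lt (hσ s hs t ht hst)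
  refine SS.spread B (fun s => minSupp (f (σ s))) b (hT.subset ?_) hle ?_ ?_
  · intro x hx
    obtain ⟨s, hs, rfl⟩ := Finset.mem_image.1 hx
    exact hBT s hs
  · intro s hs t ht h1
    apply hb
    by_contra hc
    rcases lt_or_eq_of_le (not_lt.1 hc) with h2 | h2
    · have := hlt t ht s hs h2; omega
    · subst h2; omega
  · intro s hs t ht h1
    rcases lt_trichotomy s t with h2 | h2 | h2
    · have := hlt s hs t ht h2; omega
    · rw [h2]
    · have := hlt t ht s hs h2; omega

theorem SCC.count {P : IWParams} {n d p : ℕ} {f : Fin d → c00} {w : Fin d → ℕ∞}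
    (h : Op P n d f w) {a b : ℕ → ℕ} (hab : Succ a b) (ha : 1 ≤ a 0) {ε : ℝ} {F : Finset ℕ}
    {c : ℕ → ℝ} (hscc : SCC a b p ε F c) (hnp : n ≤ p) {B : Finset ℕ} (hB : B ⊆ F)
    {σ : ℕ → Fin d} (hσ : ∀ s ∈ B, ∀ t ∈ B, s < t → σ s < σ t)
    (hle : ∀ s ∈ B, minSupp (f (σ s)) ≤ b s) : ∑ s ∈ B, c s ≤ ε := by
  refine hscc.small B hB ?_
  refine SS.mono hnp (h.SS_image hab.strictMono_right hσ hle h.adm ?_) ?_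
  · intro s _; exact Finset.mem_image_of_mem (fun q => minSupp (f q)) (Finset.mem_univ _)
  · intro i hi
    obtain ⟨s, _, rfl⟩ := Finset.mem_image.1 hi
    have h1 := hab.strictMono_left.monotone (Nat.zero_le s)
    have h2 := (hab s).1
    omega

/-- At the critical level `p + 1`, a family which starts before `b0` consists of at most `b0`
families of level `p`. -/
theorem SCC.count_succ {P : IWParams} {d p : ℕ} {f : Fin d → c00} {w : Fin d → ℕ∞}
    (h : Op P (p + 1) d f w) {a b : ℕ → ℕ} (hab : Succ a b) {ε : ℝ} {F : Finset ℕ}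
    {c : ℕ → ℝ} (hscc : SCC a b p ε F c) (hε : 0 ≤ ε) {b0 : ℕ} {q0 : Fin d}
    (hq0 : minSupp (f q0) ≤ b0) {B : Finset ℕ} (hB : B ⊆ F)
    {σ : ℕ → Fin d} (hσ : ∀ s ∈ B, ∀ t ∈ B, s < t → σ s < σ t)
    (hle : ∀ s ∈ B, minSupp (f (σ s)) ≤ b s) : ∑ s ∈ B, c s ≤ b0 * ε := by
  classical
  obtain ⟨e, D, hD1, hD2, hD3, hD4⟩ := h.adm
  have hmem : ∀ q, minSupp (f q) ∈ Finset.univ.image fun q => minSupp (f q) := fun q =>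
    Finset.mem_image_of_mem (fun q => minSupp (f q)) (Finset.mem_univ _)
  have he : e ≤ b0 := (hD3 _ (hmem q0)).trans hq0
  calc ∑ s ∈ B, c s
      ≤ ∑ s ∈ (Finset.range e).biUnion fun k => B.filter fun s => minSupp (f (σ s)) ∈ D k, c s := by
        refine Finset.sum_le_sum_of_subset_of_nonneg ?_ fun s _ _ => hscc.nonneg s
        intro s hs
        obtain ⟨k, hk, hk2⟩ := Finset.mem_biUnion.1 (hD4 (hmem (σ s)))
        exact Finset.mem_biUnion.2 ⟨k, hk, Finset.mem_filter.2 ⟨hs, hk2⟩⟩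
    _ ≤ ∑ k ∈ Finset.range e, ∑ s ∈ B.filter (fun s => minSupp (f (σ s)) ∈ D k), c s :=
        sum_biUnion_le _ _ _ hscc.nonneg
    _ ≤ ∑ k ∈ Finset.range e, ε := by
        refine Finset.sum_le_sum fun k hk => hscc.small _ ((Finset.filter_subset _ _).trans hB) ?_
        refine h.SS_image hab.strictMono_right (σ := σ) ?_ ?_ (hD1 k (Finset.mem_range.1 hk)) ?_
        · intro s hs t ht; exact hσ s (Finset.mem_filter.1 hs).1 t (Finset.mem_filter.1 ht).1
        · intro s hs; exact hle s (Finset.mem_filter.1 hs).1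
        · intro s hs; exact (Finset.mem_filter.1 hs).2
    _ = e * ε := by simp
    _ ≤ b0 * ε := by
        have : (e : ℝ) ≤ b0 := by exact_mod_cast he
        gcongr

theorem SCC.eps_nonneg {a b : ℕ → ℕ} {p : ℕ} {ε : ℝ} {F : Finset ℕ} {c : ℕ → ℝ}
    (h : SCC a b p ε F c) : 0 ≤ ε := by
  have := h.small ∅ (Finset.empty_subset _) (by
    simp only [Finset.image_empty]; exact SS.of_card (by simp) (by simp))
  simpa using this

theorem SCC.coeff_le {a b : ℕ → ℕ} (hab : Succ a b) (ha : 1 ≤ a 0) {p : ℕ} {ε : ℝ} {F : Finset ℕ}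
    {c : ℕ → ℝ} (h : SCC a b p ε F c) (s : ℕ) : c s ≤ ε := by
  by_cases hs : s ∈ F
  · have := h.small {s} (Finset.singleton_subset_iff.2 hs) (by
      rw [Finset.image_singleton]
      refine SS.of_card (by simp) ?_
      intro i hi
      rw [Finset.mem_singleton] at hi
      have h1 := hab.strictMono_left.monotone (Nat.zero_le s)
      have h2 := (hab s).1
      omega)
    simpa using this
  · rw [h.zero s hs]; exact h.eps_nonneg

/-- Functionals of small weight are reduced by their weight on high order averages. -/
theorem low_weight_estimate {P : IWParams} {j p : ℕ} (hjp : P.n j ≤ p) {a b : ℕ → ℕ}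
    (hab : Succ a b) (ha : 1 ≤ a 0) {ε : ℝ} {F : Finset ℕ} {c : ℕ → ℝ} (hscc : SCC a b p ε F c)
    {u : ℕ → c00} (hu : ∀ s ∈ F, InI (u s) (a s) (b s)) (hu1 : ∀ s ∈ F, tNorm P (u s) ≤ 1)
    {f : c00} (hf : WT P f ((P.m j : ℕ) : ℕ∞)) :
    |evalPair f (∑ s ∈ F, c s • u s)| ≤ (P.m j : ℝ)⁻¹ + 2 * ε := by
  rcases hf.cases' with ⟨_, _, _, _, hw⟩ | ⟨j', d, g, v, hop, hfg, hw⟩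
  · exact absurd hw (ENat.natCast_ne_top _)
  have hm : P.m j = P.m j' := by exact_mod_cast hw
  have hj : j = j' := P.m_mono.injective hm
  subst hj
  have hmpos := P.m_pos j
  have heval : ∀ x, ∑ q, evalPair (g q) x = P.m j * evalPair f x := by
    intro x
    rw [hfg, evalPair_smul_left, evalPair_sum_left]
    field_simp
  have hε := hscc.eps_nonneg
  have := key_estimate hop Finset.univ hab (ε := ε) (η := 1) (C := P.m j) hu hscc.nonneg
    hscc.sum_eq.le (fun B hB σ _ h2 h3 => hscc.count hop hab ha hjp hB h2 h3) hmpos.le zero_le_one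
    hε ?_ ?_ ?_
  · rw [heval, abs_mul, abs_of_pos hmpos] at this
    have h2 := P.two_le_mR j
    have h3 : |evalPair f (∑ s ∈ F, c s • u s)| ≤ (P.m j : ℝ)⁻¹ * (ε * P.m j + ε + 1) := by
      rw [inv_mul_eq_div, le_div_iff₀ hmpos]; linarith
    refine h3.trans ?_
    have h4 : (P.m j : ℝ)⁻¹ ≤ 1 := inv_le_one_of_one_le₀ (by linarith)
    have h5 : (P.m j : ℝ)⁻¹ * (ε * P.m j + ε + 1) = ε + (P.m j : ℝ)⁻¹ * ε + (P.m j : ℝ)⁻¹ := by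
      field_simp
    rw [h5]
    have h6 : (P.m j : ℝ)⁻¹ * ε ≤ 1 * ε := by gcongr
    linarith
  · intro s hs
    rw [heval, abs_mul, abs_of_pos hmpos]
    have := (hf.abs_le_tNorm (u s)).trans (hu1 s hs)
    calc (P.m j : ℝ) * |evalPair f (u s)| ≤ P.m j * 1 := by gcongr
      _ = _ := mul_one _
  · intro q _ s hs
    exact ((hop.mem q).abs_le_tNorm (u s)).trans (hu1 s hs)
  · intro q _ s hs t _ _
    exact Or.inl (((hop.mem q).abs_le_tNorm (u s)).trans (hu1 s hs))

/-! ### Norming by functionals of large weight -/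

theorem evalPair_eq_zero_of_lt {f x : c00} {a b : ℕ} (hx : InI x a b) (h : maxSupp f < a) :
    evalPair f x = 0 := by
  by_contra hne
  obtain ⟨i, h1, h2⟩ := exists_touch hne
  have := le_maxSupp h1
  have := (hx i h2).1
  omega

theorem evalPair_eq_zero_of_gt {f x : c00} {a b : ℕ} (hx : InI x a b) (h : b < minSupp f) :
    evalPair f x = 0 := by
  by_contra hne
  obtain ⟨i, h1, h2⟩ := exists_touch hne
  have := minSupp_le h1
  have := (hx i h2).2
  omega

theorem evalPair_eq_zero_of_InI {f x : c00} {a b a' b' : ℕ} (hf : InI f a' b') (hx : InI x a b)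
    (h : b' < a ∨ b < a') : evalPair f x = 0 := by
  by_contra hne
  obtain ⟨i, h1, h2⟩ := exists_touch hne
  have := hf i h1
  have := hx i h2
  omega

theorem sum_peel {d : ℕ} (F : Fin d → ℝ) (q0 : Fin d) (h : ∀ q < q0, F q = 0) :
    ∑ q, F q = F q0 + ∑ q ∈ Finset.univ.filter (fun q => q0 < q), F q := by
  classical
  have h1 : q0 ∉ Finset.univ.filter (fun q => q0 < q) := by simp
  rw [← Finset.sum_insert h1]
  refine (Finset.sum_subset (Finset.subset_univ _) fun q _ hq => h q ?_).symm
  simp only [Finset.mem_insert, Finset.mem_filter, Finset.mem_univ, true_and, not_or, not_lt] at hq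
  exact lt_of_le_of_ne hq.2 hq.1

/-- On `[a, b]` there is an `S_r`-admissible very fast growing family of functionals of weights
beyond `N` whose sum is at least `1/4` at `x`. -/
structure HiFam (P : IWParams) (r : ℕ) (N : ℕ) (a b : ℕ) (x : c00) {d : ℕ} (Q : Finset (Fin d))
    (g : Fin d → c00) (w : Fin d → ℕ∞) : Prop where
  mem : ∀ q ∈ Q, WT P (g q) (w q)
  ne : ∀ q ∈ Q, (g q).support.Nonempty
  inI : ∀ q ∈ Q, InI (g q) a b
  large : ∀ q ∈ Q, (N : ℕ∞) < w q
  before : ∀ q ∈ Q, ∀ q' ∈ Q, q < q' → Before (g q) (g q') (w q')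
  adm : SS r (Q.image fun q => minSupp (g q))
  eval : 1 / 4 ≤ ∑ q ∈ Q, evalPair (g q) x

theorem IWParams.self_le_m (P : IWParams) (j : ℕ) : j ≤ P.m j := P.m_mono.id_le j

/-- If unit vectors cannot be normed by single functionals of arbitrarily large weight, then the
functionals norming them have bounded weight; the components of such a functional, except possibly
the first one which meets the vector, have weights beyond the start of the vector. -/
theorem exists_HiFam {P : IWParams} {y : ℕ → c00} {a b : ℕ → ℕ} (hab : Succ a b) (ha : 1 ≤ a 0)
    (hy : ∀ s, InI (y s) (a s) (b s)) (hy1 : ∀ s, tNorm P (y s) = 1) :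
    ∃ r, ∀ N s0 : ℕ, ∃ s ≥ s0, ∃ (d : ℕ) (Q : Finset (Fin d)) (g : Fin d → c00) (w : Fin d → ℕ∞),
      HiFam P r N (a s) (b s) (y s) Q g w := by
  classical
  have hapos : ∀ s, 1 ≤ a s := fun s => ha.trans (hab.strictMono_left.monotone (Nat.zero_le s))
  by_cases H : ∀ N s0 : ℕ, ∃ s ≥ s0, ∃ f w, WT P f w ∧ (N : ℕ∞) < w ∧ 7 / 10 < evalPair f (y s)
  · refine ⟨1, fun N s0 => ?_⟩
    obtain ⟨s, hs, f, w, hf, hw, hfy⟩ := H N s0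
    have he := evalPair_restr f (hy s)
    have hne : restr f (a s) (b s) ≠ 0 := by
      intro h0
      rw [h0, evalPair_zero_left] at he
      linarith
    have hsup := Finsupp.support_nonempty_iff.2 hne
    refine ⟨s, hs, 1, Finset.univ, fun _ => restr f (a s) (b s), fun _ => w,
      fun _ _ => (hf.restr _ _).resolve_left hne, fun _ _ => hsup, fun _ _ => InI_restr _ _ _,
      fun _ _ => hw, ?_, ?_, ?_⟩
    · intro q _ q' _ hqq; omega
    · refine SS.of_card (by simp) ?_
      intro i hi
      obtain ⟨q, -, rfl⟩ := Finset.mem_image.1 hi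
      exact (hapos s).trans (InI_restr f _ _ _ (minSupp_ne hsup)).1
    · simp only [Finset.univ_unique, Finset.sum_singleton, he]
      linarith
  · push Not at H
    obtain ⟨W, s1, H⟩ := H
    refine ⟨P.n W, fun N s0 => ?_⟩
    set s := max (max s0 s1) (N + 1) with hs
    have hsN : N < a s := by
      have : s ≤ a s := hab.strictMono_left.id_le s
      omega
    obtain ⟨f, w, hf, hfy⟩ := exists_lt_of_lt_tNorm (P := P) (x := y s) (C := 7 / 10)
      (by rw [hy1]; norm_num)
    have hwW : w ≤ W := by
      by_contra hc
      exact absurd hfy (not_lt.2 (H s (by omega) f w hf (not_le.1 hc)))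
    rcases hf.cases' with ⟨_, _, _, _, rfl⟩ | ⟨j, d, g, v, hop, hfg, hw⟩
    · exact absurd (top_le_iff.1 hwW) (ENat.natCast_ne_top _)
    have hjW : j ≤ W := by
      rw [hw] at hwW
      have : P.m j ≤ W := by exact_mod_cast hwW
      exact (P.self_le_m j).trans this
    have hmpos := P.m_pos j
    have h2m := P.two_le_mR j
    have heval : ∑ q, evalPair (g q) (y s) = P.m j * evalPair f (y s) := by
      rw [hfg, evalPair_smul_left, evalPair_sum_left]
      field_simp
    have hbig : 7 / 10 * (P.m j : ℝ) < ∑ q, evalPair (g q) (y s) := by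
      rw [heval]; nlinarith
    rcases hop.peel (a s) with hall | ⟨q0, -, hq1, hq2⟩
    · rw [Finset.sum_eq_zero fun q _ => evalPair_eq_zero_of_lt (hy s) (hall q)] at hbig
      nlinarith
    rw [sum_peel _ q0 fun q hq => evalPair_eq_zero_of_lt (hy s) (hq1 q hq)] at hbig
    have hq0 := (hop.mem q0).le_tNorm (y s)
    rw [hy1] at hq0
    set Q := Finset.univ.filter fun q => q0 < q ∧ restr (g q) (a s) (b s) ≠ 0 with hQ
    have hsum : ∑ q ∈ Finset.univ.filter (fun q => q0 < q), evalPair (g q) (y s)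
        = ∑ q ∈ Q, evalPair (restr (g q) (a s) (b s)) (y s) := by
      rw [← Finset.sum_subset (s₁ := Q) (s₂ := Finset.univ.filter (fun q => q0 < q))]
      · exact Finset.sum_congr rfl fun q _ => (evalPair_restr _ (hy s)).symm
      · intro q hq
        simp only [hQ, Finset.mem_filter, Finset.mem_univ, true_and] at hq ⊢
        exact hq.1
      · intro q hq hq'
        simp only [hQ, Finset.mem_filter, Finset.mem_univ, true_and, not_and, not_not] at hq hq'
        rw [← evalPair_restr _ (hy s), hq' hq, evalPair_zero_left]
    have hne : ∀ q ∈ Q, (restr (g q) (a s) (b s)).support.Nonempty := fun q hq =>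
      Finsupp.support_nonempty_iff.2 (Finset.mem_filter.1 hq).2.2
    have hmin : ∀ q ∈ Q, minSupp (g q) ≤ minSupp (restr (g q) (a s) (b s)) := fun q hq =>
      minSupp_le (restr_apply_ne (minSupp_ne (hne q hq))).1
    have hmax : ∀ q ∈ Q, maxSupp (restr (g q) (a s) (b s)) ≤ maxSupp (g q) := fun q hq =>
      le_maxSupp (restr_apply_ne (maxSupp_ne (hne q hq))).1
    have hbef : ∀ q ∈ Q, ∀ q' ∈ Q, q < q' →
        Before (restr (g q) (a s) (b s)) (restr (g q') (a s) (b s)) (v q') :=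
      fun q hq q' hq' hlt => (hop.before q q' hlt).mono (hmax q hq) (hmin q' hq')
    refine ⟨s, by omega, d, Q, fun q => restr (g q) (a s) (b s), v, ?_, hne,
      fun q _ => InI_restr _ _ _, ?_, hbef, ?_, ?_⟩
    · intro q hq; exact ((hop.mem q).restr _ _).resolve_left (Finset.mem_filter.1 hq).2.2
    · intro q hq
      exact lt_trans (by exact_mod_cast hsN) (hq2 q (Finset.mem_filter.1 hq).2.1)
    · refine SS.mono (P.n_mono.monotone hjW) (SS.spread Q (fun q => minSupp (g q)) _
        (hop.adm.subset (Finset.image_subset_image (Finset.subset_univ _))) hmin ?_ ?_) ?_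
      · intro q hq r hr hlt
        have hqr : q < r := by
          by_contra hc
          rcases lt_or_eq_of_le (not_lt.1 hc) with h1 | h1
          · have := hop.min_lt h1; omega
          · subst h1; omega
        have := (hbef q hq r hr hqr).1
        have := minSupp_le_maxSupp (restr (g q) (a s) (b s))
        omega
      · intro q hq r hr heq
        rcases lt_trichotomy q r with h1 | h1 | h1
        · have := hop.min_lt h1; omega
        · rw [h1]
        · have := hop.min_lt h1; omega
      · intro i hi
        obtain ⟨q, hq, rfl⟩ := Finset.mem_image.1 hi
        exact (hapos s).trans (InI_restr (g q) _ _ _ (minSupp_ne (hne q hq))).1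
    · rw [← hsum]
      linarith

/-- A block sequence, each of whose members is normed up to the factor `1/4` by an
`S_r`-admissible family of functionals whose weights exceed the supports of all previous members. -/
structure HiSeq (P : IWParams) (r : ℕ) (v : ℕ → c00) (a b : ℕ → ℕ) (d : ℕ → ℕ)
    (Q : ∀ s, Finset (Fin (d s))) (g : ∀ s, Fin (d s) → c00) (w : ∀ s, Fin (d s) → ℕ∞) :
    Prop where
  succ : Succ a b
  pos : 1 ≤ a 0
  inI : ∀ s, InI (v s) (a s) (b s)
  norm : ∀ s, tNorm P (v s) = 1
  fam : ∀ s, ∃ N, HiFam P r N (a s) (b s) (v s) (Q s) (g s) (w s)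
  large : ∀ i s, i < s → ∀ q ∈ Q s, (b i : ℕ∞) < w s q

theorem exists_HiSeq {P : IWParams} {y : ℕ → c00} {a b : ℕ → ℕ} (hab : Succ a b) (ha : 1 ≤ a 0)
    (hy : ∀ s, InI (y s) (a s) (b s)) (hy1 : ∀ s, tNorm P (y s) = 1) :
    ∃ (r : ℕ) (v : ℕ → c00) (a' b' : ℕ → ℕ) (d : ℕ → ℕ) (Q : ∀ s, Finset (Fin (d s)))
      (g : ∀ s, Fin (d s) → c00) (w : ∀ s, Fin (d s) → ℕ∞),
      (∀ s, v s ∈ Set.range y) ∧ HiSeq P r v a' b' d Q g w := by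
  obtain ⟨r, hr⟩ := exists_HiFam hab ha hy hy1
  choose S hS D Q g w H using hr
  -- the pair is the current lower bound for weights and for indices
  let st : ℕ → ℕ × ℕ := fun k => Nat.rec (0, 0) (fun _ p => (b (S p.1 p.2), S p.1 p.2 + 1)) k
  have hst : ∀ k, st (k + 1) = (b (S (st k).1 (st k).2), S (st k).1 (st k).2 + 1) := fun _ => rfl
  let φ : ℕ → ℕ := fun k => S (st k).1 (st k).2
  have hφ : StrictMono φ := by
    refine strictMono_nat_of_lt_succ fun k => ?_
    have := hS (st (k + 1)).1 (st (k + 1)).2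
    have h2 : (st (k + 1)).2 = φ k + 1 := by rw [hst]
    change φ k < S (st (k + 1)).1 (st (k + 1)).2
    omega
  refine ⟨r, fun k => y (φ k), fun k => a (φ k), fun k => b (φ k), fun k => D (st k).1 (st k).2,
    fun k => Q (st k).1 (st k).2, fun k => g (st k).1 (st k).2, fun k => w (st k).1 (st k).2,
    fun k => ⟨_, rfl⟩, ?_, ?_, fun s => hy _, fun s => hy1 _, fun s => ⟨_, H _ _⟩, ?_⟩
  · intro s
    exact ⟨(hab _).1, hab.lt (hφ (Nat.lt_succ_self s))⟩
  · exact ha.trans (hab.strictMono_left.monotone (Nat.zero_le _))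
  · intro i s his q hq
    obtain ⟨k, rfl⟩ : ∃ k, s = k + 1 := ⟨s - 1, by omega⟩
    refine lt_of_le_of_lt ?_ ((H (st (k + 1)).1 (st (k + 1)).2).large q hq)
    have h1 : (st (k + 1)).1 = b (φ k) := by rw [hst]
    rw [h1]
    exact_mod_cast hab.strictMono_right.monotone (hφ.monotone (by omega : i ≤ k))

/-- Lower `ℓ₁` estimate at the cost of the weight `m_t`. -/
theorem HiSeq.lower {P : IWParams} {r : ℕ} {v : ℕ → c00} {a b d : ℕ → ℕ}
    {Q : ∀ s, Finset (Fin (d s))} {g : ∀ s, Fin (d s) → c00} {w : ∀ s, Fin (d s) → ℕ∞}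
    (h : HiSeq P r v a b d Q g w) {E : Finset ℕ} {k t : ℕ} (hE : SS k (E.image a))
    (ht : k + r ≤ P.n t) {D : ℕ → ℝ} (hD : ∀ i, 0 ≤ D i) :
    (∑ i ∈ E, D i) / (4 * P.m t) ≤ tNorm P (∑ i ∈ E, D i • v i) := by
  classical
  choose N hN using h.fam
  have hmono := h.succ.strictMono_left
  have hmem : WT P ((P.m t : ℝ)⁻¹ • ∑ p ∈ E.sigma Q, g p.1 p.2) ((P.m t : ℕ) : ℕ∞) := by
    refine WT_of_finset t (E.sigma Q) (fun p => g p.1 p.2) (fun p => w p.1 p.2) ?_ ?_ ?_ ?_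
    · intro p hp; exact (hN p.1).mem _ (Finset.mem_sigma.1 hp).2
    · intro p hp; exact (hN p.1).ne _ (Finset.mem_sigma.1 hp).2
    · have key : ∀ p ∈ E.sigma Q, ∀ p' ∈ E.sigma Q, p.1 < p'.1 →
          Before (g p.1 p.2) (g p'.1 p'.2) (w p'.1 p'.2) := by
        intro p hp p' hp' hlt
        have h1 := (Finset.mem_sigma.1 hp).2
        have h2 := (Finset.mem_sigma.1 hp').2
        have h3 := ((hN p.1).inI _ h1 _ (maxSupp_ne ((hN p.1).ne _ h1))).2
        have h4 := ((hN p'.1).inI _ h2 _ (minSupp_ne ((hN p'.1).ne _ h2))).1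
        have h5 := h.succ.lt hlt
        exact ⟨by omega, lt_of_le_of_lt (by exact_mod_cast h3) (h.large _ _ hlt _ h2)⟩
      intro p hp p' hp' hne
      rcases lt_trichotomy p.1 p'.1 with hlt | heq | hlt
      · exact Or.inl (key p hp p' hp' hlt)
      · obtain ⟨s, q⟩ := p
        obtain ⟨s', q'⟩ := p'
        dsimp only at heq
        subst heq
        have h1 := (Finset.mem_sigma.1 hp).2
        have h2 := (Finset.mem_sigma.1 hp').2
        have hqq : q ≠ q' := fun e => hne (by rw [e])
        rcases lt_or_gt_of_ne hqq with hlt | hlt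
        · exact Or.inl ((hN s).before q h1 q' h2 hlt)
        · exact Or.inr ((hN s).before q' h2 q h1 hlt)
      · exact Or.inr (key p' hp' p hp hlt)
    · have hin : ∀ s, ∀ i ∈ (Q s).image (fun q => minSupp (g s q)), a s ≤ i ∧ i ≤ b s := by
        intro s i hi
        obtain ⟨q, hq, rfl⟩ := Finset.mem_image.1 hi
        exact (hN s).inI q hq _ (minSupp_ne ((hN s).ne q hq))
      have hcomp := SS.comp (q := r) E a (fun s => (Q s).image fun q => minSupp (g s q)) hE
        (fun s _ s' _ he => hmono.injective he) (fun s _ => (hN s).adm)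
        (fun s _ i hi => (hin s i hi).1)
        (fun s _ s' _ hlt i hi i' hi' => by
          have h1 := (hin s i hi).2
          have h2 := (hin s' i' hi').1
          have h3 := h.succ.lt (hmono.lt_iff_lt.1 hlt)
          omega)
      refine (SS.mono ht hcomp ?_).subset ?_
      · intro i hi
        obtain ⟨s, hs, hi⟩ := Finset.mem_biUnion.1 hi
        exact (h.pos.trans (hmono.monotone (Nat.zero_le s))).trans (hin s i hi).1
      · intro i hi
        obtain ⟨p, hp, rfl⟩ := Finset.mem_image.1 hi
        rw [Finset.mem_sigma] at hp
        exact Finset.mem_biUnion.2 ⟨p.1, hp.1,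
          Finset.mem_image_of_mem (fun q => minSupp (g p.1 q)) hp.2⟩
  refine le_trans ?_ (hmem.le_tNorm _)
  rw [evalPair_smul_left, evalPair_sum_left, Finset.sum_sigma]
  have hterm : ∀ s ∈ E, D s * (1 / 4) ≤
      ∑ q ∈ Q s, evalPair (g s q) (∑ i ∈ E, D i • v i) := by
    intro s hs
    have : ∀ q ∈ Q s, evalPair (g s q) (∑ i ∈ E, D i • v i) = D s * evalPair (g s q) (v s) := by
      intro q hq
      rw [evalPair_sum_right, Finset.sum_eq_single_of_mem s hs, evalPair_smul_right]
      intro i _ his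
      rw [evalPair_smul_right, evalPair_eq_zero_of_InI ((hN s).inI q hq) (h.inI i), mul_zero]
      rcases lt_or_gt_of_ne his with h1 | h1
      · exact Or.inr (h.succ.lt h1)
      · exact Or.inl (h.succ.lt h1)
    rw [Finset.sum_congr rfl this, ← Finset.mul_sum]
    exact mul_le_mul_of_nonneg_left (hN s).eval (hD s)
  have hsum := Finset.sum_le_sum hterm
  rw [← Finset.sum_mul] at hsum
  have hm := P.m_pos t
  calc (∑ i ∈ E, D i) / (4 * P.m t) = (P.m t : ℝ)⁻¹ * ((∑ i ∈ E, D i) * (1 / 4)) := by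
        field_simp
    _ ≤ _ := by gcongr

/-! ### Averages of almost maximal norm -/

/-- Iterated averages of order `p + 1` of the sequence `v`, inflated by the factor `κ` in each
step. The last two arguments are the endpoints of an interval containing the support. -/
inductive Lvl (v : ℕ → c00) (a b : ℕ → ℕ) (p : ℕ) (ε κ : ℝ) (N : ℕ) : ℕ → c00 → ℕ → ℕ → Prop
  | zero (s : ℕ) (hs : N < a s) : Lvl v a b p ε κ N 0 (v s) (a s) (b s)
  | succ (k : ℕ) (u : ℕ → c00) (lo hi : ℕ → ℕ) (F : Finset ℕ) (c : ℕ → ℝ) (s0 s1 : ℕ)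
      (hs : Succ lo hi) (hu : ∀ s, Lvl v a b p ε κ N k (u s) (lo s) (hi s))
      (hscc : SCC lo hi p ε F c) (h01 : s0 ≤ s1) (hF : ∀ s ∈ F, s0 ≤ s ∧ s ≤ s1) :
      Lvl v a b p ε κ N (k + 1) (κ • ∑ s ∈ F, c s • u s) (lo s0) (hi s1)

theorem Lvl.props {v : ℕ → c00} {a b : ℕ → ℕ} {p : ℕ} {ε κ : ℝ} {N : ℕ} (hab : Succ a b)
    (hv : ∀ s, InI (v s) (a s) (b s)) (hκ : 0 ≤ κ) {k : ℕ} {x : c00} {lo hi : ℕ}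
    (h : Lvl v a b p ε κ N k x lo hi) :
    lo ≤ hi ∧ N < lo ∧ InI x lo hi ∧ x ∈ Submodule.span ℝ (Set.range v) ∧
    ∃ (D : ℕ →₀ ℝ) (E : Finset ℕ), (∀ i, 0 ≤ D i) ∧ D.support ⊆ E ∧
      x = Finsupp.linearCombination ℝ v D ∧
      Finsupp.linearCombination ℝ (fun _ => (1 : ℝ)) D = κ ^ k ∧
      SS ((p + 1) * k) (E.image a) ∧ ∀ i ∈ E, lo ≤ a i ∧ b i ≤ hi := by
  classical
  induction h with
  | zero s hs =>
    refine ⟨(hab s).1, hs, hv s, Submodule.subset_span ⟨s, rfl⟩, Finsupp.single s 1, {s}, ?_,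
      Finsupp.support_single_subset, by simp, by simp, ?_, ?_⟩
    · intro i; rw [Finsupp.single_apply]; split_ifs <;> norm_num
    · rw [mul_zero, Finset.image_singleton]; exact (Finset.card_singleton _).le
    · intro i hi; rw [Finset.mem_singleton] at hi; subst hi; exact ⟨le_rfl, le_rfl⟩
  | succ k u lo hi F c s0 s1 hs hu hscc h01 hF ih =>
    choose h1 h2 h3 h4 D E hD0 hDE hx hD1 hSS hE using ih
    have hlo := hs.strictMono_left
    have hhi := hs.strictMono_right
    refine ⟨(h1 s0).trans (hhi.monotone h01), h2 s0, ?_, ?_, κ • ∑ s ∈ F, c s • D s,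
      F.biUnion E, ?_, ?_, ?_, ?_, ?_, ?_⟩
    · refine InI.smul (InI.sum fun s hsF => InI.smul ?_ _) _
      exact (h3 s).mono (hlo.monotone (hF s hsF).1) (hhi.monotone (hF s hsF).2)
    · exact Submodule.smul_mem _ _ (Submodule.sum_mem _ fun s _ => Submodule.smul_mem _ _ (h4 s))
    · intro i
      rw [Finsupp.smul_apply, Finsupp.finsetSum_apply, smul_eq_mul]
      refine mul_nonneg hκ (Finset.sum_nonneg fun s _ => ?_)
      rw [Finsupp.smul_apply, smul_eq_mul]
      exact mul_nonneg (hscc.nonneg s) (hD0 s i)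
    · intro i hi
      have h5 := Finsupp.mem_support_iff.1 hi
      rw [Finsupp.smul_apply, Finsupp.finsetSum_apply, smul_eq_mul] at h5
      obtain ⟨s, hsF, h6⟩ := Finset.exists_ne_zero_of_sum_ne_zero (right_ne_zero_of_mul h5)
      rw [Finsupp.smul_apply, smul_eq_mul] at h6
      exact Finset.mem_biUnion.2 ⟨s, hsF, hDE s (Finsupp.mem_support_iff.2 (right_ne_zero_of_mul h6))⟩
    · simp only [map_smul, map_sum]
      congr 1
      exact Finset.sum_congr rfl fun s _ => by rw [← hx s]
    · simp only [map_smul, map_sum, hD1]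
      rw [← Finset.sum_smul, hscc.sum_eq, one_smul, smul_eq_mul, pow_succ]
      ring
    · have e : (p + 1) * (k + 1) = (p + 1) + (p + 1) * k := by ring
      rw [e, Finset.biUnion_image]
      refine SS.comp F lo (fun s => (E s).image a) hscc.adm (fun s _ t _ he => hlo.injective he)
        (fun s _ => hSS s) ?_ ?_
      · intro s _ i hi
        obtain ⟨l, hl, rfl⟩ := Finset.mem_image.1 hi
        exact (hE s l hl).1
      · intro s _ t _ hst i hi i' hi'
        obtain ⟨l, hl, rfl⟩ := Finset.mem_image.1 hi
        obtain ⟨l', hl', rfl⟩ := Finset.mem_image.1 hi'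
        have e1 := (hE s l hl).2
        have e2 := (hE t l' hl').1
        have e3 := hs.lt (hlo.lt_iff_lt.1 hst)
        have e4 := (hab l).1
        omega
    · intro i hi
      obtain ⟨s, hsF, hi⟩ := Finset.mem_biUnion.1 hi
      exact ⟨(hlo.monotone (hF s hsF).1).trans (hE s i hi).1,
        (hE s i hi).2.trans (hhi.monotone (hF s hsF).2)⟩

/-- Successive vectors can be extracted from a supply of vectors supported arbitrarily far out. -/
theorem exists_succ_seq {M : c00 → ℕ → ℕ → Prop} (hM : ∀ x lo hi, M x lo hi → lo ≤ hi)
    (h : ∀ n : ℕ, ∃ x lo hi, n < lo ∧ M x lo hi) (n : ℕ) :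
    ∃ (u : ℕ → c00) (lo hi : ℕ → ℕ), Succ lo hi ∧ n < lo 0 ∧ ∀ s, M (u s) (lo s) (hi s) := by
  choose X LO HI h1 h2 using h
  let st : ℕ → ℕ := fun k => Nat.rec n (fun _ q => HI q) k
  refine ⟨fun k => X (st k), fun k => LO (st k), fun k => HI (st k), ?_, h1 n, fun s => h2 _⟩
  intro s
  refine ⟨hM _ _ _ (h2 _), ?_⟩
  exact h1 (st (s + 1))

theorem Lvl.exists_far {v : ℕ → c00} {a b : ℕ → ℕ} {p : ℕ} {ε κ : ℝ} {N : ℕ} (hab : Succ a b)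
    (hv : ∀ s, InI (v s) (a s) (b s)) (hκ : 0 ≤ κ) (hε : 0 < ε) (k : ℕ) :
    ∀ n : ℕ, ∃ x lo hi, n < lo ∧ Lvl v a b p ε κ N k x lo hi := by
  induction k with
  | zero =>
    intro n
    have h1 : max n N + 1 ≤ a (max n N + 1) := hab.strictMono_left.id_le _
    exact ⟨_, _, _, by omega, Lvl.zero (max n N + 1) (by omega)⟩
  | succ k ih =>
    intro n
    obtain ⟨u, lo, hi, hs, hn, hu⟩ := exists_succ_seq (M := Lvl v a b p ε κ N k)
      (fun x lo hi h => (h.props hab hv hκ).1) ih n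
    obtain ⟨F, c, -, hscc⟩ := SCC_exists hs p ε hε 0
    refine ⟨_, _, _, hn, Lvl.succ k u lo hi F c 0 (F.sup id) hs hu hscc (Nat.zero_le _) ?_⟩
    intro s hsF
    exact ⟨Nat.zero_le _, Finset.le_sup (f := id) hsF⟩

/-- A James-type argument: if every average of order `p + 1` of blocks of norm at most one had norm
below `1 - δ`, the iterated averages would contradict the lower estimate of `HiSeq.lower`, since
the powers `C ^ n_t` outgrow `m_t`. -/
theorem HiSeq.exists_average {P : IWParams} {r : ℕ} {v : ℕ → c00} {a b d : ℕ → ℕ}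
    {Q : ∀ s, Finset (Fin (d s))} {g : ∀ s, Fin (d s) → c00} {w : ∀ s, Fin (d s) → ℕ∞}
    (h : HiSeq P r v a b d Q g w) (p : ℕ) {ε δ : ℝ} (hε : 0 < ε) (hδ : 0 < δ) (hδ1 : δ < 1)
    (N : ℕ) :
    ∃ (u : ℕ → c00) (lo hi : ℕ → ℕ) (F : Finset ℕ) (c : ℕ → ℝ), Succ lo hi ∧ N < lo 0 ∧
      (∀ s, InI (u s) (lo s) (hi s)) ∧ (∀ s, tNorm P (u s) ≤ 1) ∧
      (∀ s, u s ∈ Submodule.span ℝ (Set.range v)) ∧ SCC lo hi p ε F c ∧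
      1 - δ ≤ tNorm P (∑ s ∈ F, c s • u s) := by
  by_contra hno
  set κ : ℝ := (1 - δ)⁻¹ with hκdef
  have hδ' : 0 < 1 - δ := by linarith
  have hκ1 : 1 < κ := (one_lt_inv₀ hδ').2 (by linarith)
  have hκ0 : 0 ≤ κ := by linarith
  have hab := h.succ
  have hnorm : ∀ k x lo hi, Lvl v a b p ε κ N k x lo hi → tNorm P x ≤ 1 := by
    intro k
    induction k with
    | zero =>
      intro x lo hi hx
      cases hx with
      | zero s hs => exact (h.norm s).le
    | succ k ih =>
      intro x lo hi hx
      cases hx with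
      | succ _ u lo hi F c s0 s1 hs hu hscc h01 hF =>
        have hpr := fun s => (hu s).props hab h.inI hκ0
        have hlt : tNorm P (∑ s ∈ F, c s • u s) < 1 - δ := by
          by_contra hge
          exact hno ⟨u, lo, hi, F, c, hs, (hpr 0).2.1, fun s => (hpr s).2.2.1,
            fun s => ih _ _ _ (hu s), fun s => (hpr s).2.2.2.1, hscc, not_lt.1 hge⟩
        refine (tNorm_smul_le hκ0).trans ?_
        calc κ * tNorm P (∑ s ∈ F, c s • u s) ≤ κ * (1 - δ) := by gcongr
          _ = 1 := inv_mul_cancel₀ hδ'.ne'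
  have hbound : ∀ k t, (p + 1) * k + r ≤ P.n t → κ ^ k ≤ 4 * P.m t := by
    intro k t hkt
    obtain ⟨x, lo, hi, -, hx⟩ := Lvl.exists_far (v := v) (p := p) (ε := ε) (κ := κ) (N := N) hab
      h.inI hκ0 hε k 0
    obtain ⟨-, -, -, -, D, E, hD0, hDE, hxD, hD1, hSS, -⟩ := hx.props hab h.inI hκ0
    have hm := P.m_pos t
    have h1 := h.lower hSS hkt hD0
    have h2 : x = ∑ i ∈ E, D i • v i := by
      rw [hxD, Finsupp.linearCombination_apply, Finsupp.sum_of_support_subset D hDE _ (by simp)]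
    have h3 : κ ^ k = ∑ i ∈ E, D i := by
      rw [← hD1, Finsupp.linearCombination_apply, Finsupp.sum_of_support_subset D hDE _ (by simp)]
      simp
    rw [← h2, ← h3] at h1
    have h4 := h1.trans (hnorm k x lo hi hx)
    rwa [div_le_one (by positivity)] at h4
  set C : ℝ := κ ^ ((1 : ℝ) / (p + 1)) with hC
  have hp : (0 : ℝ) < p + 1 := by positivity
  have hC1 : 1 < C := Real.one_lt_rpow hκ1 (by positivity)
  have hCκ : C ^ (p + 1) = κ := by
    rw [hC, ← Real.rpow_natCast, ← Real.rpow_mul hκ0]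
    push_cast
    rw [one_div_mul_cancel hp.ne', Real.rpow_one]
  have htend := (P.growth_exp C hC1).eventually_gt_atTop (4 * κ * C ^ r)
  have hn : ∀ᶠ t in atTop, r ≤ P.n t := P.n_mono.tendsto_atTop.eventually_ge_atTop r
  obtain ⟨t, ht1, ht2⟩ := (htend.and hn).exists
  set k := (P.n t - r) / (p + 1) with hk
  have hk1 : (p + 1) * k + r ≤ P.n t := by
    have h5 : (p + 1) * k ≤ P.n t - r := Nat.mul_div_le (P.n t - r) (p + 1)
    omega
  have hk2 : P.n t ≤ (p + 1) * (k + 1) + r := by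
    have h5 := Nat.lt_mul_div_succ (P.n t - r) (Nat.succ_pos p)
    have h6 : P.n t - r < (p + 1) * (k + 1) := h5
    omega
  have hm := P.m_pos t
  rw [lt_div_iff₀ hm] at ht1
  have h7 : C ^ P.n t ≤ κ ^ k * κ * C ^ r := by
    calc C ^ P.n t ≤ C ^ ((p + 1) * (k + 1) + r) := pow_le_pow_right₀ hC1.le hk2
      _ = κ ^ k * κ * C ^ r := by rw [pow_add, pow_mul, hCκ, pow_succ]
  have h8 := hbound k t hk1
  have h9 : κ ^ k * κ * C ^ r ≤ 4 * P.m t * κ * C ^ r := by gcongr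
  linarith

/-! ### Vectors with sharp weight estimates -/

/-- The error attached to the stage `N`; it stays below `1/5`. -/
noncomputable def dl (N : ℕ) : ℝ := 1 / (N + 6)

theorem dl_pos (N : ℕ) : 0 < dl N := by unfold dl; positivity

theorem dl_lt (N : ℕ) : dl N < 1 / 5 := by
  unfold dl
  rw [div_lt_div_iff₀ (by positivity) (by norm_num)]
  have : (0 : ℝ) ≤ N := by positivity
  linarith

theorem dl_le {K N : ℕ} (h : K ≤ N) : dl N ≤ 1 / (K + 1) := by
  unfold dl
  have : (K : ℝ) ≤ N := by exact_mod_cast h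
  exact one_div_le_one_div_of_le (by positivity) (by linarith)

/-- `z` lives on `[lo, hi]` beyond `N`, has norm almost one, is reduced by their weight by all
functionals of weight `m_j`, `j ≤ N`, and is almost annihilated by all functionals of weight at
least `τ`. -/
structure Fine (P : IWParams) (N : ℕ) (z : c00) (lo hi τ : ℕ) : Prop where
  le : lo ≤ hi
  far : N < lo
  hi_le : hi ≤ τ
  inI : InI z lo hi
  norm_le : tNorm P z ≤ 1
  norm_ge : 1 - dl N ≤ tNorm P z
  low : ∀ j ≤ N, ∀ f, WT P f ((P.m j : ℕ) : ℕ∞) → |evalPair f z| ≤ (1 + dl N) / P.m j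
  high : ∀ f w, WT P f w → (τ : ℕ∞) ≤ w → |evalPair f z| ≤ dl N

theorem HiSeq.exists_Fine {P : IWParams} {r : ℕ} {v : ℕ → c00} {a b d : ℕ → ℕ}
    {Q : ∀ s, Finset (Fin (d s))} {g : ∀ s, Fin (d s) → c00} {w : ∀ s, Fin (d s) → ℕ∞}
    (h : HiSeq P r v a b d Q g w) (N : ℕ) :
    ∃ z lo hi τ, z ∈ Submodule.span ℝ (Set.range v) ∧ Fine P N z lo hi τ := by
  have hδ := dl_pos N
  have hδ5 := dl_lt N
  have hmN := P.m_pos N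
  set ε : ℝ := dl N / (2 * P.m N) with hε
  have hε0 : 0 < ε := by positivity
  obtain ⟨u, lo, hi, F, c, hs, hN, hu, hu1, huv, hscc, hnorm⟩ :=
    h.exists_average (P.n N) hε0 hδ (by linarith) N
  set z := ∑ s ∈ F, c s • u s with hz
  have hlo := hs.strictMono_left
  have hhi := hs.strictMono_right
  have hlo1 : 1 ≤ lo 0 := by omega
  obtain ⟨τ0, hτ0⟩ := exists_nat_ge (ell1 z / dl N)
  have hzI : InI z (lo 0) (hi (F.sup id)) := InI.sum fun s hsF =>
    ((hu s).mono (hlo.monotone (Nat.zero_le s))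
      (hhi.monotone (Finset.le_sup (f := id) hsF))).smul _
  refine ⟨z, lo 0, hi (F.sup id), max (hi (F.sup id)) (max τ0 1),
    Submodule.sum_mem _ fun s _ => Submodule.smul_mem _ _ (huv s), ?_, hN, le_max_left _ _, hzI,
    tNorm_convex_le hscc.nonneg hscc.sum_eq.le fun s _ => hu1 s, hnorm, ?_, ?_⟩
  · exact (hs 0).1.trans (hhi.monotone (Nat.zero_le _))
  · intro j hj f hf
    have h1 := low_weight_estimate (P.n_mono.monotone hj) hs hlo1 hscc (fun s _ => hu s)
      (fun s _ => hu1 s) hf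
    have hmj := P.m_pos j
    have hmjN : (P.m j : ℝ) ≤ P.m N := by exact_mod_cast P.m_mono.monotone hj
    have h2 : 2 * ε ≤ dl N / P.m j := by
      have : 2 * ε = dl N / P.m N := by rw [hε]; field_simp
      rw [this]
      gcongr
    have h3 : (1 + dl N) / P.m j = (P.m j : ℝ)⁻¹ + dl N / P.m j := by field_simp
    rw [h3]
    linarith
  · intro f w' hf hw'
    rcases hf.cases' with ⟨i, s, hsg, rfl, -⟩ | ⟨j, d', g', v', hop, hfg, hw⟩
    · have hεδ : ε ≤ dl N := by
        rw [hε]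
        refine div_le_self hδ.le ?_
        have := P.two_le_mR N
        linarith
      refine le_trans ?_ hεδ
      rw [hz, evalPair_sum_right]
      by_cases hex : ∃ s ∈ F, u s i ≠ 0
      · obtain ⟨s', hs'F, hs'⟩ := hex
        rw [Finset.sum_eq_single_of_mem s' hs'F]
        · rw [evalPair_smul_right, abs_mul, abs_of_nonneg (hscc.nonneg s')]
          have h1 := (hf.abs_le_tNorm (u s')).trans (hu1 s')
          have h2 := hscc.coeff_le hs hlo1 s'
          calc c s' * |evalPair (Finsupp.single i s) (u s')| ≤ ε * 1 := by
                gcongr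
            _ = ε := mul_one ε
        · intro t _ hts
          have h0 : u t i = 0 := by
            by_contra hne
            have e1 := hu s' i hs'
            have e2 := hu t i hne
            rcases lt_or_gt_of_ne hts with h3 | h3
            · have := hs.lt h3; omega
            · have := hs.lt h3; omega
          rw [evalPair_smul_right, evalPair_single, h0, mul_zero, mul_zero]
      · push Not at hex
        rw [Finset.sum_eq_zero, abs_zero]
        · exact hε0.le
        · intro t ht
          rw [evalPair_smul_right, evalPair_single, hex t ht, mul_zero, mul_zero]
    · rw [hw] at hf hw'
      have h1 := abs_evalPair_le hf.abs_le_inv z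
      refine h1.trans ?_
      have hmj := P.m_pos j
      have h2 : max (hi (F.sup id)) (max τ0 1) ≤ P.m j := by exact_mod_cast hw'
      have h3 : (τ0 : ℝ) ≤ P.m j := by exact_mod_cast (by omega : τ0 ≤ P.m j)
      rw [inv_mul_le_iff₀ hmj]
      rw [div_le_iff₀ hδ] at hτ0
      nlinarith

/-- A sequence of `Fine` vectors, each stage starting where the control of the previous one ends. -/
theorem HiSeq.exists_Fine_seq {P : IWParams} {r : ℕ} {v : ℕ → c00} {a b d : ℕ → ℕ}
    {Q : ∀ s, Finset (Fin (d s))} {g : ∀ s, Fin (d s) → c00} {w : ∀ s, Fin (d s) → ℕ∞}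
    (h : HiSeq P r v a b d Q g w) :
    ∃ (z : ℕ → c00) (lo hi N : ℕ → ℕ), (∀ n, z n ∈ Submodule.span ℝ (Set.range v)) ∧
      ∀ n, Fine P (N n) (z n) (lo n) (hi n) (N (n + 1)) := by
  choose Z LO HI T h1 h2 using h.exists_Fine
  let N : ℕ → ℕ := fun k => Nat.rec 0 (fun _ q => T q) k
  exact ⟨fun n => Z (N n), fun n => LO (N n), fun n => HI (N n), N, fun n => h1 _, fun n => h2 _⟩

section FineSeq

variable {P : IWParams} {z : ℕ → c00} {lo hi N : ℕ → ℕ}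

theorem Fine_lt (hz : ∀ n, Fine P (N n) (z n) (lo n) (hi n) (N (n + 1))) : StrictMono N :=
  strictMono_nat_of_lt_succ fun n => (hz n).far.trans_le ((hz n).le.trans (hz n).hi_le)

theorem Fine_succ (hz : ∀ n, Fine P (N n) (z n) (lo n) (hi n) (N (n + 1))) : Succ lo hi :=
  fun n => ⟨(hz n).le, (hz n).hi_le.trans_lt (hz (n + 1)).far⟩

/-- A functional of weight `m_j` acts sharply on all but one of the `Fine` vectors: the exceptional
stage is the one whose range `(N n, N (n + 1))` contains the weight. -/
theorem Fine_exceptional (hz : ∀ n, Fine P (N n) (z n) (lo n) (hi n) (N (n + 1))) {f : c00}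
    {j : ℕ} (hf : WT P f ((P.m j : ℕ) : ℕ∞)) :
    ∃ n', ∀ n, n ≠ n' →
      |evalPair f (z n)| ≤ (1 + dl (N n)) / P.m j ∨ |evalPair f (z n)| ≤ dl (N n) := by
  have hN := Fine_lt hz
  by_cases hex : ∃ n', N n' < j ∧ P.m j < N (n' + 1)
  · obtain ⟨n', h1, h2⟩ := hex
    refine ⟨n', fun n hn => ?_⟩
    rcases lt_or_gt_of_ne hn with h3 | h3
    · right
      refine (hz n).high f _ hf ?_
      have h4 : N (n + 1) ≤ N n' := hN.monotone h3
      have h5 := P.self_le_m j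
      exact_mod_cast (by omega : N (n + 1) ≤ P.m j)
    · left
      refine (hz n).low j ?_ f hf
      have h4 : N (n' + 1) ≤ N n := hN.monotone h3
      have h5 := P.self_le_m j
      omega
  · push Not at hex
    refine ⟨0, fun n _ => ?_⟩
    by_cases hj : j ≤ N n
    · exact Or.inl ((hz n).low j hj f hf)
    · right
      refine (hz n).high f _ hf ?_
      exact_mod_cast hex n (by omega)

/-- Almost norming functionals of the `Fine` vectors; their weight is forced to be large. -/
theorem Fine.exists_norming {N : ℕ} {z : c00} {lo hi τ : ℕ} (h : Fine P N z lo hi τ) :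
    ∃ f w, WT P f w ∧ f.support.Nonempty ∧ InI f lo hi ∧ (N : ℕ∞) < w ∧
      1 - 2 * dl N ≤ evalPair f z := by
  have hδ := dl_pos N
  have hδ5 := dl_lt N
  obtain ⟨f, w, hf, hfz⟩ := exists_lt_of_lt_tNorm (P := P) (x := z) (C := 1 - 2 * dl N)
    (by have := h.norm_ge; linarith)
  have he := evalPair_restr f h.inI
  have hne : restr f lo hi ≠ 0 := by
    intro h0
    rw [h0, evalPair_zero_left] at he
    linarith
  refine ⟨restr f lo hi, w, (hf.restr _ _).resolve_left hne, Finsupp.support_nonempty_iff.2 hne,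
    InI_restr _ _ _, ?_, by rw [he]; exact hfz.le⟩
  rcases hf.cases' with ⟨_, _, _, _, rfl⟩ | ⟨j, d, g, v, hop, hfg, rfl⟩
  · exact ENat.natCast_lt_top N
  · have hj : N < j := by
      by_contra hc
      have h1 := (le_abs_self _).trans (h.low j (not_lt.1 hc) f hf)
      have h2 : (1 + dl N) / P.m j ≤ (1 + dl N) / 2 := by
        have := P.two_le_mR j
        gcongr
      linarith
    exact_mod_cast hj.trans_le (P.self_le_m j)

end FineSeq

/-! ### Averages at the critical level -/

section Average

variable {P : IWParams} {z : ℕ → c00} {lo hi N : ℕ → ℕ} {j0 p K : ℕ} {ε : ℝ} {F : Finset ℕ}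
  {c : ℕ → ℝ}

theorem Fine_self_le (hz : ∀ n, Fine P (N n) (z n) (lo n) (hi n) (N (n + 1))) (n : ℕ) :
    n ≤ N n := (Fine_lt hz).le_apply

theorem Fine_one_le (hz : ∀ n, Fine P (N n) (z n) (lo n) (hi n) (N (n + 1))) : 1 ≤ lo 0 := by
  have := (hz 0).far
  omega

theorem Fine_abs_le_one (hz : ∀ n, Fine P (N n) (z n) (lo n) (hi n) (N (n + 1))) {f : c00}
    {w : ℕ∞} (hf : WT P f w) (n : ℕ) : |evalPair f (z n)| ≤ 1 :=
  (hf.abs_le_tNorm (z n)).trans (hz n).norm_le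

theorem Fine_dl_le (hz : ∀ n, Fine P (N n) (z n) (lo n) (hi n) (N (n + 1))) {n : ℕ} (h : K ≤ n) :
    dl (N n) ≤ 1 / (K + 1) := dl_le (h.trans (Fine_self_le hz n))

theorem abs_evalPair_average_le (hc : ∀ s, 0 ≤ c s) (f : c00) :
    |evalPair f (∑ n ∈ F, c n • z n)| ≤ ∑ n ∈ F, c n * |evalPair f (z n)| := by
  rw [evalPair_sum_right]
  refine (Finset.abs_sum_le_sum_abs _ _).trans (Finset.sum_le_sum fun n _ => ?_)
  rw [evalPair_smul_right, abs_mul, abs_of_nonneg (hc n)]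

theorem abs_evalPair_average_le_const (hscc : SCC lo hi p ε F c) {f : c00} {C : ℝ}
    (h : ∀ n ∈ F, |evalPair f (z n)| ≤ C) : |evalPair f (∑ n ∈ F, c n • z n)| ≤ C := by
  refine (abs_evalPair_average_le hscc.nonneg f).trans ?_
  calc ∑ n ∈ F, c n * |evalPair f (z n)| ≤ ∑ n ∈ F, c n * C :=
        Finset.sum_le_sum fun n hn => mul_le_mul_of_nonneg_left (h n hn) (hscc.nonneg n)
    _ = C := by rw [← Finset.sum_mul, hscc.sum_eq, one_mul]

/-- On the average, functionals of weight `m_j` with `j > j0` are reduced by their weight, because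
the exceptional vector carries only a small coefficient. -/
theorem average_heavy (hz : ∀ n, Fine P (N n) (z n) (lo n) (hi n) (N (n + 1)))
    (hscc : SCC lo hi p ε F c) (hK : ∀ n ∈ F, K ≤ n) {j : ℕ} (hj : j0 < j) {f : c00}
    (hf : WT P f ((P.m j : ℕ) : ℕ∞)) :
    |evalPair f (∑ n ∈ F, c n • z n)| ≤
      (1 + 1 / ((K : ℝ) + 1)) / P.m (j0 + 1) + 1 / ((K : ℝ) + 1) + ε := by
  classical
  set e : ℝ := 1 / ((K : ℝ) + 1) with he
  have he0 : 0 < e := by positivity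
  obtain ⟨n', hn'⟩ := Fine_exceptional hz hf
  set D : ℝ := (1 + e) / P.m (j0 + 1) + e with hD
  have hm := P.m_pos (j0 + 1)
  have hmm : (P.m (j0 + 1) : ℝ) ≤ P.m j := by exact_mod_cast P.m_mono.monotone hj
  have hfrac : 0 ≤ (1 + e) / P.m (j0 + 1) := by positivity
  have hD0 : 0 ≤ D := by positivity
  refine (abs_evalPair_average_le hscc.nonneg f).trans ?_
  have hb : ∀ n ∈ F, c n * |evalPair f (z n)| ≤ c n * D + if n = n' then c n' else 0 := by
    intro n hn
    have hc := hscc.nonneg n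
    split_ifs with h
    · subst h
      have h1 := Fine_abs_le_one hz hf n
      have : c n * |evalPair f (z n)| ≤ c n * 1 := by gcongr
      nlinarith
    · rw [add_zero]
      refine mul_le_mul_of_nonneg_left ?_ hc
      have hdl := Fine_dl_le hz (hK n hn)
      rcases hn' n h with h1 | h1
      · refine h1.trans ?_
        have : (1 + dl (N n)) / P.m j ≤ (1 + e) / P.m (j0 + 1) := by
          have := dl_pos (N n)
          gcongr
        linarith
      · linarith
  refine (Finset.sum_le_sum hb).trans ?_
  rw [Finset.sum_add_distrib, ← Finset.sum_mul, hscc.sum_eq, one_mul, Finset.sum_ite_eq']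
  have h1 := hscc.coeff_le (Fine_succ hz) (Fine_one_le hz) n'
  have h2 := hscc.eps_nonneg
  split_ifs <;> linarith

/-- Sums of functionals of large weight which are too sparse to resolve the average are small on
it: either their admissibility order is below the critical one, or they start early. -/
theorem average_sparse (hz : ∀ n, Fine P (N n) (z n) (lo n) (hi n) (N (n + 1)))
    (hp : P.n j0 = p + 1) (hscc : SCC lo hi p ε F c) (hK : ∀ n ∈ F, K ≤ n) {T : ℕ}
    (hε : ε ≤ 1 / (K + 1)) (hT : T * ε ≤ 1 / (K + 1)) {j d : ℕ} {g : Fin d → c00}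
    {v : Fin d → ℕ∞} (hop : Op P (P.n j) d g v) (hj : j ≤ j0) {Q : Finset (Fin d)}
    (hQ : ∀ q ∈ Q, ((K + 1 : ℕ) : ℕ∞) < v q) (hor : j < j0 ∨ ∃ q1, minSupp (g q1) ≤ T) :
    |∑ q ∈ Q, evalPair (g q) (∑ n ∈ F, c n • z n)| ≤ (P.m j0 + 3) * (1 / ((K : ℝ) + 1)) := by
  classical
  set e : ℝ := 1 / ((K : ℝ) + 1) with he
  have he0 : 0 < e := by positivity
  have hs := Fine_succ hz
  have hlo1 := Fine_one_le hz
  have hm := P.m_pos j0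
  have hmj := P.m_pos j
  have hmm : (P.m j : ℝ) ≤ P.m j0 := by exact_mod_cast P.m_mono.monotone hj
  have := key_estimate hop Q hs (ε := e) (η := 2 * e) (C := P.m j0) (u := z) (F := F) (c := c)
    (fun s _ => (hz s).inI) hscc.nonneg hscc.sum_eq.le ?_ hm.le (by positivity) he0.le ?_ ?_ ?_
  · refine this.trans (le_of_eq ?_)
    ring
  · intro B hB σ _ h2 h3
    rcases hor with h | ⟨q1, hq1⟩
    · have hnp : P.n j ≤ p := by
        have := P.n_mono h
        omega
      exact (hscc.count hop hs hlo1 hnp hB h2 h3).trans hε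
    · rcases hj.lt_or_eq with h | h
      · have hnp : P.n j ≤ p := by
          have := P.n_mono h
          omega
        exact (hscc.count hop hs hlo1 hnp hB h2 h3).trans hε
      · rw [h, hp] at hop
        exact (SCC.count_succ hop hs hscc hscc.eps_nonneg hq1 hB h2 h3).trans hT
  · intro s _
    have hW : WT P ((P.m j : ℝ)⁻¹ • ∑ q ∈ Q, g q) ((P.m j : ℕ) : ℕ∞) := by
      refine WT_of_finset j Q g v (fun q _ => hop.mem q) (fun q _ => hop.ne q) ?_ ?_
      · intro q _ r _ hqr
        rcases lt_or_gt_of_ne hqr with h | h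
        · exact Or.inl (hop.before q r h)
        · exact Or.inr (hop.before r q h)
      · exact hop.adm.subset (Finset.image_subset_image (Finset.subset_univ Q))
    have h1 := Fine_abs_le_one hz hW s
    rw [evalPair_smul_left, evalPair_sum_left, abs_mul, abs_inv, abs_of_pos hmj,
      inv_mul_le_iff₀ hmj] at h1
    linarith
  · intro q _ s _
    exact Fine_abs_le_one hz (hop.mem q) s
  · intro q hq s hsF t htF hst
    rcases (hop.mem q).cases' with ⟨_, _, _, _, hv⟩ | ⟨i, _, _, _, _, _, hv⟩
    · left
      have h1 := (hz s).high _ _ (hop.mem q) (by rw [hv]; exact le_top)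
      have h2 := Fine_dl_le hz (hK s hsF)
      linarith
    · have hW := hop.mem q
      have hv' := hQ q hq
      rw [hv] at hW hv'
      have hv2 : ((K : ℝ) + 1) ≤ P.m i := by
        have : K + 1 < P.m i := by exact_mod_cast hv'
        exact_mod_cast this.le
      obtain ⟨n', hn'⟩ := Fine_exceptional hz hW
      have good : ∀ n ∈ F, n ≠ n' → |evalPair (g q) (z n)| ≤ 2 * e := by
        intro n hn hne
        have h2 := Fine_dl_le hz (hK n hn)
        have h3 := dl_lt (N n)
        have h4 := dl_pos (N n)
        rcases hn' n hne with h | h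
        · refine h.trans ?_
          calc (1 + dl (N n)) / P.m i ≤ 2 / (K + 1) := by
                gcongr
                linarith
            _ = 2 * e := by rw [he]; ring
        · linarith
      by_cases hsn : s = n'
      · exact Or.inr (good t htF fun h => hst (hsn.trans h.symm))
      · exact Or.inl (good s hsF hsn)

end Average

/-! ### The upper estimate -/

/-- A finite block sequence on which the functionals of the norming set act, up to `E`, like on the
basis of the target: those of weight `m_{j0}` are bounded by one, those of larger weight by `θ`, and
tails of large weight of the remaining ones are negligible. -/
structure Tame (P : IWParams) (j0 K : ℕ) (E θ : ℝ) {m : ℕ} (X : Fin m → c00)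
    (A B T : Fin m → ℕ) : Prop where
  inI : ∀ i, InI (X i) (A i) (B i)
  lt : ∀ i i', i < i' → B i < A i'
  le : ∀ i i', i < i' → B i ≤ T i'
  far : ∀ i, K + 1 ≤ A i
  unit : ∀ i f, WT P f ⊤ → |evalPair f (X i)| ≤ E
  crit : ∀ i f, WT P f ((P.m j0 : ℕ) : ℕ∞) → |evalPair f (X i)| ≤ 1 + E
  heavy : ∀ i j f, j0 < j → WT P f ((P.m j : ℕ) : ℕ∞) → |evalPair f (X i)| ≤ θ + E
  sparse : ∀ i j d (g : Fin d → c00) (v : Fin d → ℕ∞) (Q : Finset (Fin d)), Op P (P.n j) d g v →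
    j ≤ j0 → (∀ q ∈ Q, ((K + 1 : ℕ) : ℕ∞) < v q) → (j < j0 ∨ ∃ q1, minSupp (g q1) ≤ T i) →
    |∑ q ∈ Q, evalPair (g q) (X i)| ≤ E

theorem abs_sum_mul_le {m : ℕ} {a t : Fin m → ℝ} {C : ℝ} (h : ∀ i, |t i| ≤ C) :
    |∑ i, a i * t i| ≤ C * ∑ i, |a i| := by
  refine (Finset.abs_sum_le_sum_abs _ _).trans ?_
  rw [Finset.mul_sum]
  refine Finset.sum_le_sum fun i _ => ?_
  rw [abs_mul, mul_comm]
  exact mul_le_mul_of_nonneg_right (h i) (abs_nonneg _)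

theorem evalPair_comb {m : ℕ} (f : c00) (a : Fin m → ℝ) (X : Fin m → c00) :
    evalPair f (∑ i, a i • X i) = ∑ i, a i * evalPair f (X i) := by
  rw [evalPair_sum_right]
  exact Finset.sum_congr rfl fun i _ => evalPair_smul_right _ _ _

/-- The upper estimate, by induction on the functional: weights above `m_{j0}` give `θ` per vector,
and for the others either essentially one vector is seen (possible only for the weight `m_{j0}`)
or only one component matters, to which the induction hypothesis applies. -/
theorem Tame.upper {P : IWParams} {j0 K : ℕ} {E θ : ℝ} {m : ℕ} {X : Fin m → c00}
    {A B T : Fin m → ℕ} (h : Tame P j0 K E θ X A B T) (hE : 0 ≤ E) (a : Fin m → ℝ) {M : ℝ}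
    (hM0 : 0 ≤ M) (hM1 : ∀ i, |a i| ≤ M) (hM2 : θ * ∑ i, |a i| ≤ M) {f : c00} {w : ℕ∞}
    (hf : WT P f w) :
    |evalPair f (∑ i, a i • X i)| ≤ M + 2 * E * ∑ i, |a i| := by
  classical
  set A1 := ∑ i, |a i| with hA1
  have hA10 : 0 ≤ A1 := Finset.sum_nonneg fun _ _ => abs_nonneg _
  have hEA : 0 ≤ E * A1 := mul_nonneg hE hA10
  refine WT.ind (M := fun f _ => |evalPair f (∑ i, a i • X i)| ≤ M + 2 * E * A1) ?_ ?_ hf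
  · intro k s hs
    rw [evalPair_comb]
    have := abs_sum_mul_le (a := a) fun i => h.unit i _ (WT.unit k s hs)
    linarith
  intro j d g v hop ih
  have hW : WT P ((P.m j : ℝ)⁻¹ • ∑ q, g q) ((P.m j : ℕ) : ℕ∞) := by
    refine WT_of_finset j Finset.univ g v (fun q _ => hop.mem q) (fun q _ => hop.ne q) ?_ hop.adm
    intro q _ r _ hqr
    rcases lt_or_gt_of_ne hqr with h | h
    · exact Or.inl (hop.before q r h)
    · exact Or.inr (hop.before r q h)
  have hmj := P.m_pos j
  have hmj2 := P.two_le_mR j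
  have hinv : (P.m j : ℝ)⁻¹ ≤ 1 / 2 := by
    rw [one_div]; exact inv_anti₀ (by norm_num) hmj2
  have hinv0 : 0 ≤ (P.m j : ℝ)⁻¹ := by positivity
  rcases lt_or_ge j0 j with hj | hj
  · rw [evalPair_comb]
    have := abs_sum_mul_le (a := a) fun i => h.heavy i j _ hj hW
    rw [add_mul] at this
    linarith
  rcases hop.peel (K + 1) with hall | ⟨q0, hq0, hq1, hq2⟩
  · have : evalPair ((P.m j : ℝ)⁻¹ • ∑ q, g q) (∑ i, a i • X i) = 0 := by
      rw [evalPair_comb]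
      refine Finset.sum_eq_zero fun i _ => ?_
      rw [evalPair_smul_left, evalPair_sum_left, Finset.sum_eq_zero, mul_zero, mul_zero]
      intro q _
      exact evalPair_eq_zero_of_lt (h.inI i) ((hall q).trans_le (h.far i))
    rw [this, abs_zero]
    linarith
  set Q := Finset.univ.filter fun q => q0 < q with hQ
  have hQv : ∀ q ∈ Q, ((K + 1 : ℕ) : ℕ∞) < v q := fun q hq => hq2 q (Finset.mem_filter.1 hq).2
  have hdec : ∀ i, evalPair ((P.m j : ℝ)⁻¹ • ∑ q, g q) (X i) =
      (P.m j : ℝ)⁻¹ * (evalPair (g q0) (X i) + ∑ q ∈ Q, evalPair (g q) (X i)) := by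
    intro i
    rw [evalPair_smul_left, evalPair_sum_left, sum_peel _ q0 fun q hq =>
      evalPair_eq_zero_of_lt (h.inI i) ((hq1 q hq).trans_le (h.far i))]
  -- if the tail is negligible on all vectors, the induction hypothesis for `g q0` suffices
  have main : (∀ i, |∑ q ∈ Q, evalPair (g q) (X i)| ≤ E) →
      |evalPair ((P.m j : ℝ)⁻¹ • ∑ q, g q) (∑ i, a i • X i)| ≤ M + 2 * E * A1 := by
    intro hsm
    have h1 : evalPair ((P.m j : ℝ)⁻¹ • ∑ q, g q) (∑ i, a i • X i) =
        (P.m j : ℝ)⁻¹ * (evalPair (g q0) (∑ i, a i • X i) +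
          ∑ i, a i * ∑ q ∈ Q, evalPair (g q) (X i)) := by
      rw [evalPair_comb, evalPair_comb, ← Finset.sum_add_distrib, Finset.mul_sum]
      refine Finset.sum_congr rfl fun i _ => ?_
      rw [hdec]
      ring
    have h2 := abs_sum_mul_le (a := a) hsm
    have h3 := ih q0
    have h4 := abs_add_le (evalPair (g q0) (∑ i, a i • X i))
      (∑ i, a i * ∑ q ∈ Q, evalPair (g q) (X i))
    rw [h1, abs_mul, abs_of_nonneg hinv0]
    calc (P.m j : ℝ)⁻¹ * _ ≤ 1 / 2 * (M + 2 * E * A1 + E * A1) := by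
          refine mul_le_mul hinv (by linarith) (abs_nonneg _) (by norm_num)
      _ ≤ _ := by linarith
  rcases hj.lt_or_eq with hj' | hj'
  · exact main fun i => h.sparse i j d g v Q hop hj hQv (Or.inl hj')
  by_cases hex : ∃ i, minSupp (g q0) ≤ B i
  · obtain ⟨i1, hi1, hmin⟩ := WellFounded.has_min (wellFounded_lt (α := Fin m))
      {i | minSupp (g q0) ≤ B i} hex
    simp only [Set.mem_ofPred_eq] at hi1 hmin
    have hz0 : ∀ i < i1, evalPair (g q0) (X i) = 0 := by
      intro i hi
      refine evalPair_eq_zero_of_gt (h.inI i) ?_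
      by_contra hc
      exact hmin i (not_lt.1 hc) hi
    have hzQ : ∀ i < i1, ∑ q ∈ Q, evalPair (g q) (X i) = 0 := by
      intro i hi
      refine Finset.sum_eq_zero fun q hq => evalPair_eq_zero_of_gt (h.inI i) ?_
      have h1 := hop.min_lt (Finset.mem_filter.1 hq).2
      by_contra hc
      exact hmin i (by omega) hi
    have hgt : ∀ i, i1 < i → |∑ q ∈ Q, evalPair (g q) (X i)| ≤ E := fun i hi =>
      h.sparse i j d g v Q hop hj hQv (Or.inr ⟨q0, hi1.trans (h.le i1 i hi)⟩)
    by_cases hmax : maxSupp (g q0) ≤ B i1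
    · -- `g q0` does not reach beyond `X i1`, so only that vector is really seen
      rw [evalPair_comb]
      have hb : ∀ i, |a i * evalPair ((P.m j : ℝ)⁻¹ • ∑ q, g q) (X i)| ≤
          E * |a i| + if i = i1 then |a i1| else 0 := by
        intro i
        rw [abs_mul]
        have ha := abs_nonneg (a i)
        split_ifs with hi
        · subst hi
          rw [hj'] at hW ⊢
          have := h.crit i _ hW
          nlinarith
        · have : |evalPair ((P.m j : ℝ)⁻¹ • ∑ q, g q) (X i)| ≤ E := by
            rw [hdec]
            rcases lt_or_gt_of_ne hi with hi' | hi'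
            · rw [hz0 i hi', hzQ i hi', add_zero, mul_zero, abs_zero]
              exact hE
            · rw [evalPair_eq_zero_of_lt (h.inI i) (hmax.trans_lt (h.lt i1 i hi')), zero_add,
                abs_mul, abs_of_nonneg hinv0]
              have h1 := hgt i hi'
              have h2 := abs_nonneg (∑ q ∈ Q, evalPair (g q) (X i))
              nlinarith
          nlinarith
      refine (Finset.abs_sum_le_sum_abs _ _).trans ((Finset.sum_le_sum fun i _ => hb i).trans ?_)
      rw [Finset.sum_add_distrib, ← Finset.mul_sum, Finset.sum_ite_eq' Finset.univ i1,
        if_pos (Finset.mem_univ _)]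
      have := hM1 i1
      linarith
    · refine main fun i => ?_
      rcases lt_trichotomy i i1 with hi | rfl | hi
      · rw [hzQ i hi, abs_zero]; exact hE
      · rw [Finset.sum_eq_zero, abs_zero]
        · exact hE
        · intro q hq
          refine evalPair_eq_zero_of_gt (h.inI i) ?_
          have := (hop.before q0 q (Finset.mem_filter.1 hq).2).1
          omega
      · exact hgt i hi
  · push Not at hex
    refine main fun i => ?_
    rw [Finset.sum_eq_zero, abs_zero]
    · exact hE
    · intro q hq
      refine evalPair_eq_zero_of_gt (h.inI i) ?_
      have h1 := hop.min_lt (Finset.mem_filter.1 hq).2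
      have h2 := hex i
      omega

/-! ### The sequence of averages -/

/-- Successive special convex combinations with coefficients `c k` on `F k ⊆ [S k, S (k + 1))`; the
smallness parameter of the `k`-th one is chosen against `hi (S k)`, which dominates the supports of
all previous ones. -/
structure AvgSeq (lo hi : ℕ → ℕ) (p : ℕ) (S : ℕ → ℕ) (F : ℕ → Finset ℕ) (c : ℕ → ℕ → ℝ) :
    Prop where
  mono : StrictMono S
  mem : ∀ k, ∀ n ∈ F k, S k ≤ n ∧ n < S (k + 1)
  scc : ∀ k, SCC lo hi p (1 / (((S k : ℝ) + 1) * (hi (S k) + 1))) (F k) (c k)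

theorem exists_AvgSeq {lo hi : ℕ → ℕ} (h : Succ lo hi) (p : ℕ) :
    ∃ S F c, AvgSeq lo hi p S F c := by
  have hex : ∀ s : ℕ, ∃ F c, (∀ n ∈ F, s ≤ n) ∧
      SCC lo hi p (1 / (((s : ℝ) + 1) * (hi s + 1))) F c := fun s =>
    SCC_exists h p _ (by positivity) s
  choose G C hG hC using hex
  let S : ℕ → ℕ := fun k => Nat.rec 0 (fun _ s => (G s).sup id + 1) k
  have hS : ∀ k, S (k + 1) = (G (S k)).sup id + 1 := fun k => rfl
  have hmem : ∀ k, ∀ n ∈ G (S k), S k ≤ n ∧ n < S (k + 1) := by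
    intro k n hn
    refine ⟨hG _ n hn, ?_⟩
    rw [hS]
    exact Nat.lt_succ_of_le (Finset.le_sup (f := id) hn)
  refine ⟨S, fun k => G (S k), fun k => C (S k), strictMono_nat_of_lt_succ fun k => ?_, hmem,
    fun k => hC _⟩
  have hne : (G (S k)).Nonempty := by
    rw [Finset.nonempty_iff_ne_empty]
    intro h0
    have := (hC (S k)).sum_eq
    rw [h0] at this
    simp at this
  obtain ⟨n, hn⟩ := hne
  have := hmem k n hn
  omega

/-- The vectors generating the spreading model: `m_{j0}` times the averages. -/
noncomputable def avgVec (P : IWParams) (j0 : ℕ) (z : ℕ → c00) (F : ℕ → Finset ℕ)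
    (c : ℕ → ℕ → ℝ) (k : ℕ) : c00 :=
  (P.m j0 : ℝ) • ∑ n ∈ F k, c k n • z n

section AvgSeq

variable {P : IWParams} {z : ℕ → c00} {lo hi N : ℕ → ℕ} {j0 p K : ℕ} {S : ℕ → ℕ}
  {F : ℕ → Finset ℕ} {c : ℕ → ℕ → ℝ}

theorem AvgSeq.le_self (h : AvgSeq lo hi p S F c) (k : ℕ) : k ≤ S k := h.mono.le_apply

theorem AvgSeq.eps_le (h : AvgSeq lo hi p S F c) {k : ℕ} (hk : K ≤ k) :
    1 / (((S k : ℝ) + 1) * (hi (S k) + 1)) ≤ 1 / ((K : ℝ) + 1) ∧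
    (hi (S k) : ℝ) * (1 / (((S k : ℝ) + 1) * (hi (S k) + 1))) ≤ 1 / ((K : ℝ) + 1) := by
  have h1 : (K : ℝ) ≤ S k := by exact_mod_cast hk.trans (h.le_self k)
  have hK0 : (0 : ℝ) ≤ K := by positivity
  have hh : (0 : ℝ) ≤ hi (S k) := by positivity
  constructor
  · refine one_div_le_one_div_of_le (by positivity) ?_
    nlinarith
  · rw [mul_one_div, div_le_div_iff₀ (by positivity) (by positivity)]
    nlinarith

/-- Far out, finitely many of the vectors `avgVec` form a `Tame` sequence with `θ = m_{j0} / m_{j0+1}`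
and error of order `1 / K`. -/
theorem AvgSeq.tame (hz : ∀ n, Fine P (N n) (z n) (lo n) (hi n) (N (n + 1)))
    (hp : P.n j0 = p + 1) (h : AvgSeq lo hi p S F c) (hK : j0 ≤ K) {m : ℕ} {j : Fin m → ℕ}
    (hj : StrictMono j) (hKj : ∀ i, K ≤ j i) :
    Tame P j0 K (4 * (P.m j0 : ℝ) ^ 2 * (1 / ((K : ℝ) + 1))) ((P.m j0 : ℝ) / P.m (j0 + 1))
      (fun i => avgVec P j0 z F c (j i)) (fun i => lo (S (j i)))
      (fun i => hi (S (j i + 1) - 1)) (fun i => hi (S (j i))) := by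
  set e : ℝ := 1 / ((K : ℝ) + 1) with he
  have he0 : 0 < e := by positivity
  have hs := Fine_succ hz
  have hm := P.m_pos j0
  have hm2 := P.two_le_mR j0
  have hm' := P.m_pos (j0 + 1)
  have hSpos : ∀ k, 0 < S (k + 1) := fun k => (Nat.zero_le _).trans_lt (h.mono (Nat.lt_succ_self k))
  have hSj : ∀ i i', i < i' → S (j i + 1) ≤ S (j i') := fun i i' hi =>
    h.mono.monotone (hj hi)
  have hF : ∀ i, ∀ n ∈ F (j i), K ≤ n := fun i n hn =>
    ((hKj i).trans (h.le_self _)).trans (h.mem _ n hn).1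
  have hscale : ∀ (f : c00) i, |evalPair f (avgVec P j0 z F c (j i))| =
      P.m j0 * |evalPair f (∑ n ∈ F (j i), c (j i) n • z n)| := by
    intro f i
    rw [avgVec, evalPair_smul_right, abs_mul, abs_of_pos hm]
  refine ⟨?_, ?_, ?_, ?_, ?_, ?_, ?_, ?_⟩
  · intro i
    refine InI.smul (InI.sum fun n hn => ((hz n).inI.mono ?_ ?_).smul _) _
    · exact hs.strictMono_left.monotone (h.mem _ n hn).1
    · have := (h.mem _ n hn).2
      exact hs.strictMono_right.monotone (by omega)
  · intro i i' hi
    have := hSj i i' hi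
    have := hSpos (j i)
    exact hs.lt (by omega)
  · intro i i' hi
    have := hSj i i' hi
    exact hs.strictMono_right.monotone (by omega)
  · intro i
    have h1 := (hKj i).trans (h.le_self _)
    have h2 := Fine_self_le hz (S (j i))
    have h3 := (hz (S (j i))).far
    omega
  · intro i f hf
    rw [hscale]
    have := abs_evalPair_average_le_const (h.scc (j i)) (z := z) (f := f) (C := e) fun n hn =>
      ((hz n).high f _ hf le_top).trans (Fine_dl_le hz (hF i n hn))
    calc (P.m j0 : ℝ) * _ ≤ P.m j0 * e := by gcongr
      _ ≤ 4 * (P.m j0 : ℝ) ^ 2 * e := by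
        refine mul_le_mul_of_nonneg_right ?_ he0.le
        nlinarith
  · intro i f hf
    rw [hscale]
    have := abs_evalPair_average_le_const (h.scc (j i)) (z := z) (f := f)
      (C := (1 + e) / P.m j0) fun n hn => by
        refine ((hz n).low j0 ((hK.trans (hF i n hn)).trans (Fine_self_le hz n)) f hf).trans ?_
        have := Fine_dl_le hz (hF i n hn)
        gcongr
    calc (P.m j0 : ℝ) * _ ≤ P.m j0 * ((1 + e) / P.m j0) := by gcongr
      _ = 1 + 1 * e := by field_simp
      _ ≤ 1 + 4 * (P.m j0 : ℝ) ^ 2 * e := by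
        refine add_le_add_right (mul_le_mul_of_nonneg_right ?_ he0.le) _
        nlinarith
  · intro i t f ht hf
    rw [hscale]
    have h1 := average_heavy hz (h.scc (j i)) (hF i) ht hf
    have h2 := (h.eps_le (hKj i)).1
    have hθ : (P.m j0 : ℝ) / P.m (j0 + 1) ≤ 1 := by
      rw [div_le_one hm']
      exact_mod_cast P.m_mono.monotone (Nat.le_succ j0)
    calc (P.m j0 : ℝ) * _ ≤ P.m j0 * ((1 + e) / P.m (j0 + 1) + e + e) := by
          refine mul_le_mul_of_nonneg_left (h1.trans ?_) hm.le
          linarith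
      _ = (P.m j0 : ℝ) / P.m (j0 + 1) + ((P.m j0 : ℝ) / P.m (j0 + 1) + 2 * P.m j0) * e := by
        ring
      _ ≤ _ := by
        refine add_le_add_right (mul_le_mul_of_nonneg_right ?_ he0.le) _
        nlinarith
  · intro i t d g v Q hop ht hQ hor
    have h1 := average_sparse hz hp (h.scc (j i)) (hF i) (h.eps_le (hKj i)).1
      (h.eps_le (hKj i)).2 hop ht hQ hor
    have h2 : ∑ q ∈ Q, evalPair (g q) (avgVec P j0 z F c (j i)) =
        P.m j0 * ∑ q ∈ Q, evalPair (g q) (∑ n ∈ F (j i), c (j i) n • z n) := by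
      rw [Finset.mul_sum]
      exact Finset.sum_congr rfl fun q _ => by rw [avgVec, evalPair_smul_right]
    rw [h2, abs_mul, abs_of_pos hm]
    calc (P.m j0 : ℝ) * _ ≤ P.m j0 * ((P.m j0 + 3) * e) := by gcongr
      _ = P.m j0 * (P.m j0 + 3) * e := by ring
      _ ≤ _ := by
        refine mul_le_mul_of_nonneg_right ?_ he0.le
        nlinarith

/-! ### The lower estimate -/

/-- Norming functionals of the `Fine` vectors are combined into one of weight `m_t` as soon as the
minima of the vectors involved are `S_{n_t}`-admissible. -/
theorem AvgSeq.lower (hz : ∀ n, Fine P (N n) (z n) (lo n) (hi n) (N (n + 1)))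
    (h : AvgSeq lo hi p S F c) {m : ℕ} {j : Fin m → ℕ}
    (hj : StrictMono j) (hKj : ∀ i, K ≤ j i) (a : Fin m → ℝ) {t : ℕ} (I : Finset (Fin m))
    (hSS : SS (P.n t) ((I.biUnion fun i => F (j i)).image lo)) :
    (P.m j0 : ℝ) / P.m t * (∑ i ∈ I, |a i|) * (1 - 2 * (1 / ((K : ℝ) + 1))) ≤
      tNorm P (∑ i, a i • avgVec P j0 z F c (j i)) := by
  classical
  set e : ℝ := 1 / ((K : ℝ) + 1) with he
  have hs := Fine_succ hz
  have hm := P.m_pos j0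
  have hmt := P.m_pos t
  choose f w hfW hfne hfI hfw hfz using fun n => (hz n).exists_norming
  let s : ℝ → ℝ := fun r => if 0 ≤ r then 1 else -1
  have hs1 : ∀ r : ℝ, s r * r = |r| := by
    intro r
    simp only [s]
    split_ifs with hr
    · rw [abs_of_nonneg hr, one_mul]
    · rw [abs_of_neg (not_le.1 hr), neg_one_mul]
  have hs2 : ∀ r : ℝ, ∀ g : c00, s r • g = g ∨ s r • g = -g := by
    intro r g
    simp only [s]
    split_ifs
    · left; rw [one_smul]
    · right; rw [neg_one_smul]
  have hmin : ∀ r : ℝ, ∀ g : c00, minSupp (s r • g) = minSupp g := by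
    intro r g
    rcases hs2 r g with h | h <;> rw [h]
    exact minSupp_neg g
  have hmax : ∀ r : ℝ, ∀ g : c00, maxSupp (s r • g) = maxSupp g := by
    intro r g
    rcases hs2 r g with h | h <;> rw [h]
    exact maxSupp_neg g
  have hminI : ∀ n, lo n ≤ minSupp (f n) := fun n => (hfI n _ (minSupp_ne (hfne n))).1
  have hmaxI : ∀ n, maxSupp (f n) ≤ hi n := fun n => (hfI n _ (maxSupp_ne (hfne n))).2
  have hbef : ∀ n n', n < n' → Before (f n) (f n') (w n') := by
    intro n n' hn
    have h1 := hs.lt hn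
    have h2 := hminI n'
    have h3 := hmaxI n
    refine ⟨by omega, lt_of_le_of_lt ?_ (hfw n')⟩
    have h4 := (hz n).hi_le
    have h5 : N (n + 1) ≤ N n' := (Fine_lt hz).monotone hn
    exact_mod_cast (by omega : maxSupp (f n) ≤ N n')
  have hdisj : ∀ i i' n, n ∈ F (j i) → n ∈ F (j i') → i = i' := by
    intro i i' n hn hn'
    have h1 := h.mem _ n hn
    have h2 := h.mem _ n hn'
    by_contra hne
    rcases lt_or_gt_of_ne hne with h3 | h3
    · have : S (j i + 1) ≤ S (j i') := h.mono.monotone (hj h3)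
      omega
    · have : S (j i' + 1) ≤ S (j i) := h.mono.monotone (hj h3)
      omega
  set D : Finset (Σ _ : Fin m, ℕ) := I.sigma fun i => F (j i) with hD
  have hW : WT P ((P.m t : ℝ)⁻¹ • ∑ q ∈ D, s (a q.1) • f q.2) ((P.m t : ℕ) : ℕ∞) := by
    refine WT_of_finset t D (fun q => s (a q.1) • f q.2) (fun q => w q.2) ?_ ?_ ?_ ?_
    · intro q _
      rcases hs2 (a q.1) (f q.2) with h | h <;> simp only [h]
      · exact hfW _
      · exact (hfW _).neg
    · intro q _
      rcases hs2 (a q.1) (f q.2) with h | h <;> simp only [h]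
      · exact hfne _
      · rw [Finsupp.support_neg]; exact hfne _
    · intro q hq r hr hqr
      simp only [Before, hmin, hmax]
      have hne : q.2 ≠ r.2 := by
        intro h2
        obtain ⟨i, n⟩ := q
        obtain ⟨i', n'⟩ := r
        rw [hD, Finset.mem_sigma] at hq hr
        simp only at hq hr h2
        subst h2
        exact hqr (by rw [hdisj i i' n hq.2 hr.2])
      rcases lt_or_gt_of_ne hne with h1 | h1
      · exact Or.inl (hbef _ _ h1)
      · exact Or.inr (hbef _ _ h1)
    · simp only [hmin]
      refine SS.spread D (fun q => lo q.2) (fun q => minSupp (f q.2)) ?_ (fun q _ => hminI _) ?_ ?_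
      · refine hSS.subset fun k hk => ?_
        obtain ⟨q, hq, rfl⟩ := Finset.mem_image.1 hk
        rw [hD, Finset.mem_sigma] at hq
        exact Finset.mem_image_of_mem lo (Finset.mem_biUnion.2 ⟨q.1, hq.1, hq.2⟩)
      · intro q _ r _ hqr
        have h1 := (hbef _ _ (hs.strictMono_left.lt_iff_lt.1 hqr)).1
        have h2 := minSupp_le_maxSupp (f q.2)
        omega
      · intro q _ r _ hqr
        rw [hs.strictMono_left.injective hqr]
  refine le_trans ?_ (hW.le_tNorm _)
  have hfx : ∀ n k, evalPair (f n) (avgVec P j0 z F c k) =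
      P.m j0 * (c k n * evalPair (f n) (z n)) := by
    intro n k
    rw [avgVec, evalPair_smul_right, evalPair_sum_right]
    congr 1
    by_cases hn : n ∈ F k
    · rw [Finset.sum_eq_single_of_mem n hn, evalPair_smul_right]
      intro n' _ hne
      rw [evalPair_smul_right, evalPair_eq_zero_of_InI (hfI n) (hz n').inI, mul_zero]
      rcases lt_or_gt_of_ne hne with h1 | h1
      · exact Or.inr (hs.lt h1)
      · exact Or.inl (hs.lt h1)
    · rw [(h.scc k).zero n hn, zero_mul]
      refine Finset.sum_eq_zero fun n' hn' => ?_
      have hne : n' ≠ n := fun h => hn (h ▸ hn')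
      rw [evalPair_smul_right, evalPair_eq_zero_of_InI (hfI n) (hz n').inI, mul_zero]
      rcases lt_or_gt_of_ne hne with h1 | h1
      · exact Or.inr (hs.lt h1)
      · exact Or.inl (hs.lt h1)
  have hval : ∀ i ∈ I, ∀ n ∈ F (j i), P.m j0 * |a i| * (1 - 2 * e) * c (j i) n ≤
      evalPair (s (a i) • f n) (∑ i, a i • avgVec P j0 z F c (j i)) := by
    intro i _ n hn
    rw [evalPair_smul_left, evalPair_comb, Finset.sum_eq_single i, hfx]
    · have h1 : s (a i) * (a i * (P.m j0 * (c (j i) n * evalPair (f n) (z n)))) =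
          (P.m j0 * |a i| * c (j i) n) * evalPair (f n) (z n) := by
        rw [← hs1]; ring
      rw [h1]
      have h2 : 1 - 2 * e ≤ evalPair (f n) (z n) := by
        have h3 := hfz n
        have h4 := Fine_dl_le hz (K := K) (((hKj i).trans (h.le_self _)).trans (h.mem _ n hn).1)
        linarith
      have h5 : 0 ≤ P.m j0 * |a i| * c (j i) n :=
        mul_nonneg (mul_nonneg hm.le (abs_nonneg _)) ((h.scc _).nonneg n)
      calc P.m j0 * |a i| * (1 - 2 * e) * c (j i) n
          = (P.m j0 * |a i| * c (j i) n) * (1 - 2 * e) := by ring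
        _ ≤ _ := mul_le_mul_of_nonneg_left h2 h5
    · intro i' _ hne
      rw [hfx, (h.scc (j i')).zero n fun hn' => hne (hdisj i' i n hn' hn)]
      ring
    · intro hi
      exact absurd (Finset.mem_univ i) hi
  rw [evalPair_smul_left, evalPair_sum_left, hD, Finset.sum_sigma]
  have hsum : ∑ i ∈ I, P.m j0 * |a i| * (1 - 2 * e) ≤
      ∑ i ∈ I, ∑ n ∈ F (j i),
        evalPair (s (a i) • f n) (∑ i, a i • avgVec P j0 z F c (j i)) := by
    refine Finset.sum_le_sum fun i hi => ?_
    refine le_trans (le_of_eq ?_) (Finset.sum_le_sum fun n hn => hval i hi n hn)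
    rw [← Finset.mul_sum, (h.scc _).sum_eq, mul_one]
  have heq : (P.m j0 : ℝ) / P.m t * (∑ i ∈ I, |a i|) * (1 - 2 * e) =
      (P.m t : ℝ)⁻¹ * ∑ i ∈ I, P.m j0 * |a i| * (1 - 2 * e) := by
    rw [← Finset.sum_mul, ← Finset.mul_sum]
    ring
  rw [heq]
  exact mul_le_mul_of_nonneg_left hsum (by positivity)

theorem AvgSeq.lower_sup (hz : ∀ n, Fine P (N n) (z n) (lo n) (hi n) (N (n + 1)))
    (hp : P.n j0 = p + 1) (h : AvgSeq lo hi p S F c) {m : ℕ} {j : Fin m → ℕ}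
    (hj : StrictMono j) (hKj : ∀ i, K ≤ j i) (a : Fin m → ℝ) (i : Fin m) :
    |a i| * (1 - 2 * (1 / ((K : ℝ) + 1))) ≤ tNorm P (∑ i, a i • avgVec P j0 z F c (j i)) := by
  have := h.lower hz (j0 := j0) hj hKj a (t := j0) {i} (by
    rw [Finset.singleton_biUnion, hp]
    exact (h.scc _).adm)
  rwa [div_self (P.m_pos j0).ne', Finset.sum_singleton, one_mul] at this

/-- The union of `m ≤ K` sets of order `n_{j0}` beyond `K` has order `n_{j0} + 1 ≤ n_{j0+1}`, so the
weight `m_{j0+1}` reaches all vectors at once. -/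
theorem AvgSeq.lower_l1 (hz : ∀ n, Fine P (N n) (z n) (lo n) (hi n) (N (n + 1)))
    (hp : P.n j0 = p + 1) (h : AvgSeq lo hi p S F c) {m : ℕ} (hmK : m ≤ K) {j : Fin m → ℕ}
    (hj : StrictMono j) (hKj : ∀ i, K ≤ j i) (a : Fin m → ℝ) :
    (P.m j0 : ℝ) / P.m (j0 + 1) * (∑ i, |a i|) * (1 - 2 * (1 / ((K : ℝ) + 1))) ≤
      tNorm P (∑ i, a i • avgVec P j0 z F c (j i)) := by
  classical
  have hs := Fine_succ hz
  refine h.lower hz hj hKj a Finset.univ ?_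
  have hfar : ∀ k ∈ (Finset.univ.biUnion fun i => F (j i)).image lo, m ≤ k ∧ 1 ≤ k := by
    intro k hk
    obtain ⟨n, hn, rfl⟩ := Finset.mem_image.1 hk
    obtain ⟨i, -, hn⟩ := Finset.mem_biUnion.1 hn
    have h1 := (h.mem _ n hn).1
    have h2 := h.le_self (j i)
    have h3 := hKj i
    have h4 := Fine_self_le hz n
    have h5 := (hz n).far
    omega
  have hn2 : p + 1 + 1 ≤ P.n (j0 + 1) := by
    rw [← hp]
    exact P.n_mono (Nat.lt_succ_self j0)
  refine SS.mono hn2 ?_ fun k hk => (hfar k hk).2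
  -- at most `m ≤ min` pieces of order `p + 1`
  refine ⟨m, fun k => if hk : k < m then (F (j ⟨k, hk⟩)).image lo else ∅, ?_, ?_,
    fun k hk => (hfar k hk).1, ?_⟩
  · intro k hk
    simp only [hk, dif_pos]
    exact (h.scc _).adm
  · intro k l hkl hl u hu v hv
    simp only [hl, hkl.trans hl, dif_pos] at hu hv
    obtain ⟨n, hn, rfl⟩ := Finset.mem_image.1 hu
    obtain ⟨n', hn', rfl⟩ := Finset.mem_image.1 hv
    have h1 := (h.mem _ n hn).2
    have h2 := (h.mem _ n' hn').1
    have h3 : S (j ⟨k, hkl.trans hl⟩ + 1) ≤ S (j ⟨l, hl⟩) :=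
      h.mono.monotone (hj (Fin.mk_lt_mk.2 hkl))
    exact hs.strictMono_left (by omega)
  · intro k hk
    obtain ⟨n, hn, rfl⟩ := Finset.mem_image.1 hk
    obtain ⟨i, -, hn⟩ := Finset.mem_biUnion.1 hn
    refine Finset.mem_biUnion.2 ⟨i, Finset.mem_range.2 i.2, ?_⟩
    simp only [i.2, dif_pos]
    exact Finset.mem_image_of_mem lo hn

theorem AvgSeq.generates (hz : ∀ n, Fine P (N n) (z n) (lo n) (hi n) (N (n + 1)))
    (hp : P.n j0 = p + 1) (h : AvgSeq lo hi p S F c) :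
    GeneratesSMwith (tNorm P) (avgVec P j0 z F c)
      (fun m a => max (⨆ i, |a i|) (((P.m j0 : ℝ) / (P.m (j0 + 1) : ℝ)) * ∑ i, |a i|)) := by
  intro m a ε hε
  set A1 := ∑ i, |a i| with hA1
  set θ : ℝ := (P.m j0 : ℝ) / P.m (j0 + 1) with hθ
  set M : ℝ := max (⨆ i, |a i|) (θ * A1) with hM
  have hA10 : 0 ≤ A1 := Finset.sum_nonneg fun _ _ => abs_nonneg _
  have hm := P.m_pos j0
  have hm' := P.m_pos (j0 + 1)
  have hM0 : 0 ≤ M := le_max_of_le_right (by positivity)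
  have hM1 : ∀ i, |a i| ≤ M := fun i =>
    le_max_of_le_left (le_ciSup (f := fun i => |a i|) (Set.finite_range _).bddAbove i)
  set R : ℝ := 8 * (P.m j0 : ℝ) ^ 2 * A1 + 2 * M with hR
  have hR0 : 0 ≤ R := by positivity
  obtain ⟨K0, hK0⟩ := exists_nat_gt (R / ε)
  refine ⟨max K0 (max j0 (max m 2)), fun j hj hKj => ?_⟩
  set K := max K0 (max j0 (max m 2)) with hK
  have hKj0 : j0 ≤ K := by omega
  have hKm : m ≤ K := by omega
  set e : ℝ := 1 / ((K : ℝ) + 1) with he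
  have he0 : 0 < e := by positivity
  have hRe : R * e < ε := by
    have h1 : (K0 : ℝ) ≤ K := by exact_mod_cast (by omega : K0 ≤ K)
    rw [div_lt_iff₀ hε] at hK0
    rw [he, mul_one_div, div_lt_iff₀ (by positivity)]
    nlinarith
  have he2 : 0 ≤ 1 - 2 * e := by
    have h1 : (2 : ℝ) ≤ K := by exact_mod_cast (by omega : 2 ≤ K)
    have : e ≤ 1 / 2 := one_div_le_one_div_of_le (by norm_num) (by linarith)
    linarith
  have hup : tNorm P (∑ i, a i • avgVec P j0 z F c (j i)) ≤ M + R * e := by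
    refine tNorm_le fun f w hf => ?_
    have := (h.tame hz hp hKj0 hj hKj).upper (by positivity) a hM0 hM1 (le_max_right _ _) hf
    refine this.trans ?_
    have h2 : M + 2 * (4 * (P.m j0 : ℝ) ^ 2 * e) * A1 + 2 * M * e = M + R * e := by
      rw [hR]; ring
    have h3 : 0 ≤ M * e := by positivity
    linarith
  have hlow : M * (1 - 2 * e) ≤ tNorm P (∑ i, a i • avgVec P j0 z F c (j i)) := by
    rw [hM, max_mul_of_nonneg _ _ he2]
    refine max_le ?_ (h.lower_l1 hz hp hKm hj hKj a)
    rw [Real.iSup_mul_of_nonneg he2]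
    exact Real.iSup_le (fun i => h.lower_sup hz hp hj hKj a i) (tNorm_nonneg P _)
  have hlow' : M - R * e ≤ M * (1 - 2 * e) := by
    have h3 : 0 ≤ 8 * (P.m j0 : ℝ) ^ 2 * A1 * e := by positivity
    have h4 : R * e = 8 * (P.m j0 : ℝ) ^ 2 * A1 * e + 2 * M * e := by rw [hR]; ring
    linarith
  rw [abs_lt]
  constructor <;> linarith

end AvgSeq

/-- Let `Y` be a block subspace of `X̃_iw` (spanned by the normalized
block sequence `y`).  Then for every `j₀` there is a sequence `(x_k)` in `Y` generating
a spreading model isometrically equivalent to the unit vector basis of ℓ₁ equipped with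
the norm `‖∑ a_k e_k‖ = max {sup_k |a_k|, (m_{j₀}/m_{j₀+1}) ∑ |a_k|}`. -/
theorem statement19 (P : IWParams) (y : ℕ → c00) (hy : IsNormBlockSeq (tNorm P) y)
    (j0 : ℕ) :
    ∃ x : ℕ → c00, (∀ k, x k ∈ Submodule.span ℝ (Set.range y)) ∧
      GeneratesSMwith (tNorm P) x
        (fun m a => max (⨆ i, |a i|) (((P.m j0 : ℝ) / (P.m (j0 + 1) : ℝ)) * ∑ i, |a i|)) := by
  obtain ⟨-, hyb, hy1⟩ := hy
  -- the first vector is dropped so that all supports start after `0`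
  have hab : Succ (fun s => minSupp (y (s + 1))) fun s => maxSupp (y (s + 1)) :=
    fun s => ⟨minSupp_le_maxSupp _, hyb (s + 1)⟩
  have ha : 1 ≤ minSupp (y (0 + 1)) := (Nat.zero_le _).trans_lt (hyb 0)
  obtain ⟨r, v, a', b', d, Q, g, w, hv, hHi⟩ := exists_HiSeq (P := P) hab ha
    (fun s => InI_self (y (s + 1))) fun s => hy1 (s + 1)
  obtain ⟨z, lo, hi, N, hzv, hz⟩ := hHi.exists_Fine_seq
  obtain ⟨p, hp⟩ : ∃ p, P.n j0 = p + 1 := ⟨P.n j0 - 1, by have := P.n_pos j0; omega⟩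
  obtain ⟨S, F, c, h⟩ := exists_AvgSeq (Fine_succ hz) p
  have hspan : Submodule.span ℝ (Set.range v) ≤ Submodule.span ℝ (Set.range y) := by
    refine Submodule.span_mono ?_
    rintro _ ⟨s, rfl⟩
    obtain ⟨k, hk⟩ := hv s
    exact ⟨k + 1, hk⟩
  refine ⟨avgVec P j0 z F c, fun k => ?_, h.generates hz hp⟩
  exact Submodule.smul_mem _ _ (Submodule.sum_mem _ fun n _ =>
    Submodule.smul_mem _ _ (hspan (hzv n)))
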